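/- Let n ≥ 1. There exist constants ε₀ > 0 and r > 0, depending only on n, with the following property: if K is a smooth, strictly convex body in ℝ^{n+1} with positive support function h containing the origin in its interior, and 1 − ε ≤ h(x)·det(A(x)+x⊗x) ≤ 1 + ε for all x ∈ S^n for some ε ∈ (0, ε₀), then K contains a closed ball of radius r; more precisely, the translated body K − c(K) contains the closed ball of radius r centered at the origin, i.e. h(x) − ⟨x, c(K)⟩ ≥ r for all x ∈ S^n. -/

import Mathlib

open MeasureTheory Metric Real
open scoped InnerProductSpace ENNReal Topology

noncomputable section

/-- Euclidean space `ℝ^{n+1}`. -/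
abbrev Eu (n : ℕ) : Type := EuclideanSpace ℝ (Fin (n + 1))

/-- The unit sphere `S^n ⊆ ℝ^{n+1}` as a subtype. -/
abbrev Sph (n : ℕ) : Type := Metric.sphere (0 : Eu n) 1

/-- The spherical Lebesgue (surface) measure on `S^n`. -/
def sphMeas (n : ℕ) : Measure (Sph n) := (volume : Measure (Eu n)).toSphere

/-- The support function of a set `K ⊆ ℝ^{n+1}`. -/
def sfn {n : ℕ} (K : Set (Eu n)) (z : Eu n) : ℝ :=
  sSup ((fun y => ⟪z, y⟫_ℝ) '' K)

/-- The Hessian endomorphism `A(x) = D(∇ h_K)(x)`. -/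
def hessA {n : ℕ} (K : Set (Eu n)) (x : Eu n) : Eu n →L[ℝ] Eu n :=
  fderiv ℝ (gradient (sfn K)) x

/-- The rank-one endomorphism `x ⊗ x : v ↦ ⟨v, x⟩ x`. -/
def tens {n : ℕ} (x : Eu n) : Eu n →L[ℝ] Eu n :=
  (innerSL ℝ x).smulRight x

/-- `det (A(x) + x ⊗ x)`, the reciprocal Gauss curvature `1/𝒦` at `x ∈ S^n`. -/
def rK {n : ℕ} (K : Set (Eu n)) (x : Eu n) : ℝ :=
  LinearMap.det ((hessA K x + tens x : Eu n →L[ℝ] Eu n) : Eu n →ₗ[ℝ] Eu n)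

/-- `K` is a smooth, strictly convex body with positive support function. -/
structure IsSmoothConvexBody {n : ℕ} (K : Set (Eu n)) : Prop where
  compact : IsCompact K
  convex : Convex ℝ K
  interior_nonempty : (interior K).Nonempty
  pos : ∀ x : Sph n, 0 < sfn K x
  smooth : ContDiffOn ℝ (⊤ : ℕ∞) (sfn K) {(0 : Eu n)}ᶜ
  posdef : ∀ x : Sph n, ∀ v : Eu n, v ≠ 0 →
    0 < ⟪(hessA K (x : Eu n) + tens (x : Eu n)) v, v⟫_ℝ

/-- The density `h·det(A + x⊗x)` of the measure `dV` with respect to `dθ`. -/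
def dens {n : ℕ} (K : Set (Eu n)) (x : Eu n) : ℝ := sfn K x * rK K x

/-- The centroid-type point `c(K) = (∫ ∇h_K dV)/(∫ dV)`. -/
def cK {n : ℕ} (K : Set (Eu n)) : Eu n :=
  (∫ x : Sph n, dens K x ∂sphMeas n)⁻¹ •
    ∫ x : Sph n, dens K x • gradient (sfn K) x ∂sphMeas n

/-- The support function of the translated body `K - c(K)`. -/
def tsfn {n : ℕ} (K : Set (Eu n)) (x : Eu n) : ℝ := sfn K x - ⟪x, cK K⟫_ℝ

/-!
For `e ∈ ℝ^{n+1}` let `K_t` be the image of `K` under `w ↦ w / (1 - t⟪w, e⟫)`, scaled so that its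
volume agrees with that of `K` to first order in `t`. The support functions of `K_t` and `K_{-t}`
average to `h (1 + O(t²))`, so the second-order term of the Brunn–Minkowski inequality
`|K_t| |K_{-t}| ≤ |(K_t + K_{-t}) / 2|²`, summed over an orthonormal basis of vectors `e`, reads
`n ∫ ‖∇h - c‖² dV ≤ ∫ h tr A dV`. The divergence theorem for the 1-homogeneous field
`h (∇h - c) - (h - ⟪c, ·⟫) c` gives `∫ h tr A dθ + ∫ ‖∇h - c‖² dθ = (n + 1) ∫ h̃² dθ`, where
`h̃ = h - ⟪·, c⟫`. If `dV` is close to `dθ`, the two relations together with the orthogonal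
decomposition `∇h - c = h̃ y + T` show that `T` is small in `L²(dθ)` relative to `h̃`.

Since `∇h(y) ∈ K`, one has `h̃(x) ≥ h̃(y) ⟪y, x⟫ - ‖T(y)‖`. Averaging over `y` in a small spherical
ball `B` turns a lower bound for `h̃` on `B` into one at every `x` at an acute angle to `B`. If
`c + R x₁` is a point of `K` farthest from `c`, then `h̃(y) ≥ R ⟪y, x₁⟫`, and from the neighbourhood
of `x₁` two such steps reach all of the sphere. Finally `R` is bounded below because `vol K` is.
-/

section BrunnMinkowski

open scoped Pointwise

lemma volume_add_volume_le_of_isCompact {A B : Set ℝ} (hA : IsCompact A) (hB : IsCompact B)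
    (hA' : A.Nonempty) (hB' : B.Nonempty) : volume A + volume B ≤ volume (A + B) := by
  obtain ⟨a, haA, ha⟩ := hA.exists_isGreatest hA'
  obtain ⟨b, hbB, hb⟩ := hB.exists_isLeast hB'
  have overlap : (A + {b}) ∩ ({a} + B) ⊆ {a + b} := by
    rintro _ ⟨⟨x, hx, _, rfl, rfl⟩, ⟨_, rfl, z, hz, hxz⟩⟩
    exact (add_le_add_left (ha hx) _).antisymm
      ((add_le_add_right (hb hz) _).trans_eq hxz)
  calc volume A + volume B = volume (A + {b}) + volume ({a} + B) := by simp
    _ = volume ((A + {b}) ∪ ({a} + B)) :=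
      (measure_union₀ (isCompact_singleton.add hB).measurableSet.nullMeasurableSet
        (measure_mono_null overlap Real.volume_singleton)).symm
    _ ≤ volume (A + B) := measure_mono (Set.union_subset
        (Set.add_subset_add_left (Set.singleton_subset_iff.2 hbB))
        (Set.add_subset_add_right (Set.singleton_subset_iff.2 haA)))

lemma volume_add_volume_le {A B : Set ℝ} (hA : MeasurableSet A) (hB : MeasurableSet B)
    (hA' : A.Nonempty) (hB' : B.Nonempty) : volume A + volume B ≤ volume (A + B) := by
  obtain ⟨a, ha⟩ := hA'
  obtain ⟨b, hb⟩ := hB'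
  rw [hA.measure_eq_iSup_isCompact, hB.measure_eq_iSup_isCompact]
  simp only [iSup_and']
  refine ENNReal.biSup_add_biSup_le' (p := fun K => K ⊆ A ∧ IsCompact K)
    (q := fun L => L ⊆ B ∧ IsCompact L) ⟨∅, by simp⟩ ⟨∅, by simp⟩ fun K hK L hL => ?_
  calc volume K + volume L ≤ volume (insert a K) + volume (insert b L) := by
        gcongr <;> exact Set.subset_insert _ _
    _ ≤ volume (insert a K + insert b L) :=
        volume_add_volume_le_of_isCompact (hK.2.insert a) (hL.2.insert b)
          (Set.insert_nonempty _ _) (Set.insert_nonempty _ _)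
    _ ≤ volume (A + B) := measure_mono (Set.add_subset_add
        (Set.insert_subset ha hK.1) (Set.insert_subset hb hL.1))

lemma lintegral_eq_lintegral_meas_ofReal_lt {α : Type*} [MeasurableSpace α] (μ : Measure α)
    {F : α → ℝ≥0∞} (hF : Measurable F) (hF' : ∀ x, F x ≠ ∞) :
    ∫⁻ x, F x ∂μ = ∫⁻ t in Set.Ioi (0 : ℝ), μ {x | ENNReal.ofReal t < F x} := by
  calc ∫⁻ x, F x ∂μ = ∫⁻ x, ENNReal.ofReal (F x).toReal ∂μ := by
        simp only [ENNReal.ofReal_toReal (hF' _)]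
    _ = ∫⁻ t in Set.Ioi (0 : ℝ), μ {x | t < (F x).toReal} :=
        lintegral_eq_lintegral_meas_lt μ (ae_of_all _ fun _ => ENNReal.toReal_nonneg)
          hF.ennreal_toReal.aemeasurable
    _ = _ := setLIntegral_congr_fun measurableSet_Ioi fun t ht => by
        simp only [ENNReal.ofReal_lt_iff_lt_toReal (le_of_lt ht) (hF' _)]

lemma lintegral_add_lintegral_le_of_iSup_eq_one {F G H : ℝ → ℝ≥0∞} (hF : Measurable F)
    (hG : Measurable G) (hH : Measurable H) (hF1 : ⨆ x, F x = 1) (hG1 : ⨆ x, G x = 1)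
    (hFGH : ∀ x y, F x * G y ≤ H (midpoint ℝ x y) ^ 2) :
    (∫⁻ x, F x) + ∫⁻ x, G x ≤ 2 * ∫⁻ x, H x := by
  have hF_le : ∀ x, F x ≤ 1 := fun x => (le_iSup F x).trans_eq hF1
  have hG_le : ∀ x, G x ≤ 1 := fun x => (le_iSup G x).trans_eq hG1
  have hH_le : ∀ x, min (H x) 1 ≠ ∞ := fun x => ((min_le_right _ _).trans_lt (by simp)).ne
  refine le_trans ?_ (mul_le_mul_right (lintegral_mono fun x => min_le_left (H x) 1) 2)
  rw [lintegral_eq_lintegral_meas_ofReal_lt _ hF fun x => ((hF_le x).trans_lt (by simp)).ne,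
    lintegral_eq_lintegral_meas_ofReal_lt _ hG fun x => ((hG_le x).trans_lt (by simp)).ne,
    lintegral_eq_lintegral_meas_ofReal_lt _ (hH.min measurable_const) hH_le,
    ← lintegral_const_mul' _ _ (by simp), ← lintegral_add_left']
  · refine setLIntegral_mono' measurableSet_Ioi fun t _ => ?_
    rcases le_or_gt 1 (ENNReal.ofReal t) with ht | ht
    · simp [(hF_le _).trans ht |>.not_gt, (hG_le _).trans ht |>.not_gt]
    have superlevel : {x | ENNReal.ofReal t < F x} + {x | ENNReal.ofReal t < G x} ⊆
        (2 : ℝ) • {x | ENNReal.ofReal t < min (H x) 1} := by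
      rintro _ ⟨x, hx, y, hy, rfl⟩
      refine ⟨midpoint ℝ x y, lt_min ?_ ht, by simp [midpoint_eq_smul_add]⟩
      refine lt_of_pow_lt_pow_left' 2 (lt_of_lt_of_le ?_ (hFGH x y))
      exact (sq _).trans_lt (ENNReal.mul_lt_mul hx hy)
    calc _ ≤ volume ({x | ENNReal.ofReal t < F x} + {x | ENNReal.ofReal t < G x}) :=
          volume_add_volume_le (measurableSet_lt measurable_const hF)
            (measurableSet_lt measurable_const hG) (lt_iSup_iff.1 (ht.trans_eq hF1.symm))
            (lt_iSup_iff.1 (ht.trans_eq hG1.symm))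
      _ ≤ volume ((2 : ℝ) • {x | ENNReal.ofReal t < min (H x) 1}) := measure_mono superlevel
      _ = 2 * volume {x | ENNReal.ofReal t < min (H x) 1} := by
          simp [Measure.addHaar_smul]
  · refine (Antitone.measurable fun s t hst => ?_).aemeasurable
    exact measure_mono fun x hx => (ENNReal.ofReal_le_ofReal hst).trans_lt hx

lemma mul_le_sq_of_add_le_two_mul {x y z : ℝ≥0∞} (h : x + y ≤ 2 * z) : x * y ≤ z ^ 2 := by
  rcases eq_or_ne z ∞ with rfl | hz
  · simp
  have hxy : x + y ≠ ∞ := ne_top_of_le_ne_top (ENNReal.mul_ne_top (by simp) hz) h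
  lift x to NNReal using (ENNReal.add_ne_top.1 hxy).1
  lift y to NNReal using (ENNReal.add_ne_top.1 hxy).2
  lift z to NNReal using hz
  norm_cast at h ⊢
  rw [← NNReal.coe_le_coe] at h ⊢
  push_cast at h ⊢
  nlinarith [sq_nonneg ((x : ℝ) - y), x.coe_nonneg, y.coe_nonneg]

lemma lintegral_eq_iSup_lintegral_min_natCast {α : Type*} [MeasurableSpace α] (μ : Measure α)
    {F : α → ℝ≥0∞} (hF : Measurable F) :
    ∫⁻ x, F x ∂μ = ⨆ N : ℕ, ∫⁻ x, min (F x) N ∂μ := by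
  rw [← lintegral_iSup (fun N => hF.min measurable_const)
    fun N M hNM x => min_le_min_left _ (Nat.cast_le.2 hNM)]
  simp only [← inf_iSup_eq, ENNReal.iSup_natCast, inf_top_eq]

/-- The Prékopa–Leindler property of a measure, in its midpoint form (exponents `1/2`, with both
sides squared to avoid roots). -/
def IsPrekopaLeindler {E : Type*} [AddCommGroup E] [Module ℝ E] [MeasurableSpace E]
    (μ : Measure E) : Prop :=
  ∀ ⦃F G H : E → ℝ≥0∞⦄, Measurable F → Measurable G → Measurable H →
    (∀ x y, F x * G y ≤ H (midpoint ℝ x y) ^ 2) →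
    (∫⁻ x, F x ∂μ) * ∫⁻ x, G x ∂μ ≤ (∫⁻ x, H x ∂μ) ^ 2

lemma lintegral_mul_lintegral_le_of_iSup_ne_top {F G H : ℝ → ℝ≥0∞} (hF : Measurable F)
    (hG : Measurable G) (hH : Measurable H) (hF' : ⨆ x, F x ≠ ∞) (hG' : ⨆ x, G x ≠ ∞)
    (hFGH : ∀ x y, F x * G y ≤ H (midpoint ℝ x y) ^ 2) :
    (∫⁻ x, F x) * ∫⁻ x, G x ≤ (∫⁻ x, H x) ^ 2 := by
  set a := ⨆ x, F x
  set b := ⨆ x, G x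
  rcases eq_or_ne a 0 with ha | ha
  · simp [ENNReal.iSup_eq_zero.1 ha]
  rcases eq_or_ne b 0 with hb | hb
  · simp [ENNReal.iSup_eq_zero.1 hb]
  set r : ℝ≥0∞ := (a * b) ^ (1 / 2 : ℝ)
  have hr : r ^ 2 = a * b := by
    rw [← ENNReal.rpow_natCast, ← ENNReal.rpow_mul]; norm_num
  have hab_inv : (r ^ 2)⁻¹ = a⁻¹ * b⁻¹ := by rw [hr, ENNReal.mul_inv (.inl ha) (.inl hF')]
  have hr_inv : r ^ 2 * (r ^ 2)⁻¹ = 1 := ENNReal.mul_inv_cancel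
    (hr ▸ mul_ne_zero ha hb) (hr ▸ ENNReal.mul_ne_top hF' hG')
  have normalized : (∫⁻ x, F x / a) + ∫⁻ x, G x / b ≤ 2 * ∫⁻ x, H x / r := by
    refine lintegral_add_lintegral_le_of_iSup_eq_one (hF.div_const a) (hG.div_const b)
      (hH.div_const r) ?_ ?_ fun x y => ?_
    · rw [← ENNReal.iSup_div, ENNReal.div_self ha hF']
    · rw [← ENNReal.iSup_div, ENNReal.div_self hb hG']
    · calc F x / a * (G y / b) = F x * G y * (a⁻¹ * b⁻¹) := by simp only [div_eq_mul_inv]; ring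
        _ ≤ H (midpoint ℝ x y) ^ 2 * (r ^ 2)⁻¹ := by rw [hab_inv]; gcongr; exact hFGH x y
        _ = (H (midpoint ℝ x y) / r) ^ 2 := by rw [div_eq_mul_inv, mul_pow, ENNReal.inv_pow]
  simp only [div_eq_mul_inv, lintegral_mul_const _ hF, lintegral_mul_const _ hG,
    lintegral_mul_const _ hH] at normalized
  calc (∫⁻ x, F x) * ∫⁻ x, G x
      = r ^ 2 * ((∫⁻ x, F x) * a⁻¹ * ((∫⁻ x, G x) * b⁻¹)) := by
        rw [mul_mul_mul_comm, ← hab_inv, mul_left_comm, hr_inv, mul_one]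
    _ ≤ r ^ 2 * ((∫⁻ x, H x) * r⁻¹) ^ 2 := by gcongr; exact mul_le_sq_of_add_le_two_mul normalized
    _ = (∫⁻ x, H x) ^ 2 := by rw [mul_pow, ← ENNReal.inv_pow, mul_left_comm, hr_inv, mul_one]

theorem isPrekopaLeindler_volume_real : IsPrekopaLeindler (volume : Measure ℝ) := by
  intro F G H hF hG hH hFGH
  have bdd (F : ℝ → ℝ≥0∞) (N : ℕ) : ⨆ x, min (F x) N ≠ ∞ :=
    ((iSup_le fun x => min_le_right (F x) N).trans_lt (ENNReal.natCast_lt_top N)).ne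
  rw [lintegral_eq_iSup_lintegral_min_natCast _ hF, lintegral_eq_iSup_lintegral_min_natCast _ hG]
  simp only [ENNReal.iSup_mul, ENNReal.mul_iSup]
  exact iSup₂_le fun M N =>
    lintegral_mul_lintegral_le_of_iSup_ne_top (hF.min measurable_const)
    (hG.min measurable_const) hH (bdd F N) (bdd G M) fun x y =>
      (mul_le_mul' (min_le_left _ _) (min_le_left _ _)).trans (hFGH x y)

namespace IsPrekopaLeindler

variable {E E' : Type*} [AddCommGroup E] [Module ℝ E] [MeasurableSpace E]
  [AddCommGroup E'] [Module ℝ E'] [MeasurableSpace E'] {μ : Measure E} {ν : Measure E'}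

lemma prod [SFinite ν] (hμ : IsPrekopaLeindler μ) (hν : IsPrekopaLeindler ν) :
    IsPrekopaLeindler (μ.prod ν) := by
  intro F G H hF hG hH hFGH
  rw [lintegral_prod _ hF.aemeasurable, lintegral_prod _ hG.aemeasurable,
    lintegral_prod _ hH.aemeasurable]
  exact hμ hF.lintegral_prod_right' hG.lintegral_prod_right' hH.lintegral_prod_right'
    fun x y => hν (hF.comp measurable_prodMk_left) (hG.comp measurable_prodMk_left)
      (hH.comp measurable_prodMk_left) fun x' y' => hFGH (x, x') (y, y')

lemma of_measurePreserving (hμ : IsPrekopaLeindler μ) (e : E →ₗ[ℝ] E')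
    (he : MeasurePreserving e μ ν) : IsPrekopaLeindler ν := by
  intro F G H hF hG hH hFGH
  rw [← he.lintegral_comp hF, ← he.lintegral_comp hG, ← he.lintegral_comp hH]
  refine hμ (hF.comp he.measurable) (hG.comp he.measurable) (hH.comp he.measurable) fun x y => ?_
  simpa only [Function.comp_apply, ← LinearMap.coe_toAffineMap, AffineMap.map_midpoint]
    using hFGH (e x) (e y)

end IsPrekopaLeindler

lemma isPrekopaLeindler_volume_pi (n : ℕ) :
    IsPrekopaLeindler (volume : Measure (Fin n → ℝ)) := by
  induction n with
  | zero =>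
    intro F G H _ _ _ hFGH
    simpa [volume_pi, Measure.pi_of_empty _ (0 : Fin 0 → ℝ)] using hFGH 0 0
  | succ n ih =>
    have cons_eq : ⇑(MeasurableEquiv.piFinSuccAbove (fun _ : Fin (n + 1) => ℝ) 0).symm =
        Fin.consLinearEquiv ℝ fun _ : Fin (n + 1) => ℝ := by
      ext p i
      refine Fin.cases ?_ (fun i => ?_) i <;> simp [MeasurableEquiv.piFinSuccAbove]
    exact (isPrekopaLeindler_volume_real.prod ih).of_measurePreserving
      (Fin.consLinearEquiv ℝ fun _ : Fin (n + 1) => ℝ).toLinearMap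
      (cons_eq ▸ (volume_preserving_piFinSuccAbove (fun _ : Fin (n + 1) => ℝ) 0).symm)

theorem isPrekopaLeindler_volume {E : Type*} [NormedAddCommGroup E] [InnerProductSpace ℝ E]
    [FiniteDimensional ℝ E] [MeasurableSpace E] [BorelSpace E] :
    IsPrekopaLeindler (volume : Measure E) :=
  have euclidean := (isPrekopaLeindler_volume_pi (Module.finrank ℝ E)).of_measurePreserving
    (WithLp.linearEquiv 2 ℝ _).symm.toLinearMap (PiLp.volume_preserving_toLp _)
  euclidean.of_measurePreserving (stdOrthonormalBasis ℝ E).repr.symm.toLinearEquiv.toLinearMap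
    (stdOrthonormalBasis ℝ E).measurePreserving_repr_symm

theorem volume_mul_volume_le_of_midpoint_mem {E : Type*} [NormedAddCommGroup E]
    [InnerProductSpace ℝ E] [FiniteDimensional ℝ E] [MeasurableSpace E] [BorelSpace E]
    {A B C : Set E} (hA : MeasurableSet A) (hB : MeasurableSet B) (hC : MeasurableSet C)
    (h : ∀ a ∈ A, ∀ b ∈ B, midpoint ℝ a b ∈ C) : volume A * volume B ≤ volume C ^ 2 := by
  rw [← lintegral_indicator_one hA, ← lintegral_indicator_one hB, ← lintegral_indicator_one hC]
  refine isPrekopaLeindler_volume (measurable_one.indicator hA) (measurable_one.indicator hB)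
    (measurable_one.indicator hC) fun x y => ?_
  by_cases hxy : x ∈ A ∧ y ∈ B
  · simp [hxy, h x hxy.1 y hxy.2]
  · rcases not_and_or.1 hxy with hx | hy <;> simp [*]

end BrunnMinkowski

section Calculus

lemma eventually_forall_lt_zero {T Y : Type*} [TopologicalSpace T] [TopologicalSpace Y]
    [CompactSpace Y] {F : T → Y → ℝ} {t₀ : T}
    (hF : ∀ y, ContinuousAt (Function.uncurry F) (t₀, y)) (hF₀ : ∀ y, F t₀ y < 0) :
    ∀ᶠ t in 𝓝 t₀, ∀ y, F t y < 0 := by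
  have nhds_prod : ∀ y ∈ Set.univ, ∀ᶠ p : T × Y in 𝓝 (t₀, y), F p.1 p.2 < 0 :=
    fun y _ => (hF y).eventually (gt_mem_nhds (hF₀ y))
  filter_upwards [isCompact_univ.eventually_forall_of_forall_eventually
    (P := fun t y => F t y < 0) nhds_prod]
    with t ht y using ht y (Set.mem_univ y)

lemma le_add_deriv_add_half_of_deriv2_le {φ φ' φ'' : ℝ → ℝ} {M : ℝ}
    (hφ : ∀ s ∈ Set.Icc (0 : ℝ) 1, HasDerivAt φ (φ' s) s)
    (hφ' : ∀ s ∈ Set.Icc (0 : ℝ) 1, HasDerivAt φ' (φ'' s) s)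
    (hM : ∀ s ∈ Set.Icc (0 : ℝ) 1, φ'' s ≤ M) : φ 1 ≤ φ 0 + φ' 0 + M / 2 := by
  have antitone_of_deriv {g g' : ℝ → ℝ} (hg : ∀ s ∈ Set.Icc (0 : ℝ) 1, HasDerivAt g (g' s) s)
      (hg' : ∀ s ∈ Set.Icc (0 : ℝ) 1, g' s ≤ 0) : AntitoneOn g (Set.Icc 0 1) :=
    antitoneOn_of_hasDerivWithinAt_nonpos (convex_Icc 0 1)
      (fun s hs => (hg s hs).continuousAt.continuousWithinAt)
      (fun s hs => (hg s (interior_subset hs)).hasDerivWithinAt)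
      (fun s hs => hg' s (interior_subset hs))
  have first_order : AntitoneOn (fun s => φ' s - M * s) (Set.Icc 0 1) :=
    antitone_of_deriv (fun s hs => (hφ' s hs).sub ((hasDerivAt_id s).const_mul M))
      (fun s hs => by linarith [hM s hs])
  have second_order : AntitoneOn (fun s => φ s - φ' 0 * s - M / 2 * s ^ 2) (Set.Icc 0 1) := by
    refine antitone_of_deriv (fun s hs => ((hφ s hs).sub ((hasDerivAt_id s).const_mul (φ' 0))).sub
      ((hasDerivAt_pow 2 s).const_mul (M / 2))) fun s hs => ?_
    have := first_order (Set.left_mem_Icc.2 zero_le_one) hs hs.1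
    norm_num at this ⊢
    linarith
  have := second_order (Set.left_mem_Icc.2 zero_le_one) (Set.right_mem_Icc.2 zero_le_one)
    zero_le_one
  norm_num at this
  linarith

lemma exists_continuous_pow_eq_second_order (d : ℕ) :
    ∃ R : ℝ × ℝ × ℝ → ℝ, Continuous R ∧ ∀ t u v : ℝ, (1 + t * u + t ^ 2 * v) ^ d =
      1 + t * (d * u) + t ^ 2 * (d * v + d * (d - 1) / 2 * u ^ 2) + t ^ 3 * R (t, u, v) := by
  induction d with
  | zero => exact ⟨0, continuous_zero, by simp⟩
  | succ d ih =>
    obtain ⟨R, hR, hpow⟩ := ih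
    refine ⟨fun p => d * p.2.1 * p.2.2 + (d * p.2.2 + d * (d - 1) / 2 * p.2.1 ^ 2) *
      (p.2.1 + p.1 * p.2.2) + R p * (1 + p.1 * p.2.1 + p.1 ^ 2 * p.2.2), by fun_prop,
      fun t u v => ?_⟩
    rw [pow_succ, hpow]
    push_cast
    ring

section Integral

variable {Y : Type*} [TopologicalSpace Y] [CompactSpace Y] [MeasurableSpace Y]
  [OpensMeasurableSpace Y] {μ : Measure Y} [IsFiniteMeasure μ]

lemma integrable_of_continuous {E : Type*} [NormedAddCommGroup E] {f : Y → E} (hf : Continuous f) :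
    Integrable f μ :=
  hf.integrable_of_hasCompactSupport (HasCompactSupport.of_compactSpace f)

lemma tendsto_integral_pow_sub_div_sq {u v : Y → ℝ} (hu : Continuous u) (hv : Continuous v)
    (hu₀ : ∫ y, u y ∂μ = 0) (d : ℕ) :
    Filter.Tendsto
      (fun t : ℝ => ((∫ y, (1 + t * u y + t ^ 2 * v y) ^ d ∂μ) - μ.real Set.univ) / t ^ 2)
      (𝓝[≠] 0) (𝓝 (d * (∫ y, v y ∂μ) + d * (d - 1) / 2 * ∫ y, u y ^ 2 ∂μ)) := by
  obtain ⟨R, hR, hpow⟩ := exists_continuous_pow_eq_second_order d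
  have hRuv : Continuous fun p : ℝ × Y => R (p.1, u p.2, v p.2) := by fun_prop
  have continuous_remainder : Continuous fun t : ℝ => ∫ y, R (t, u y, v y) ∂μ := by
    simpa only [Measure.restrict_univ] using continuous_parametric_integral_of_continuous
      (μ := μ) (f := fun t y => R (t, u y, v y)) hRuv isCompact_univ
  set L := d * (∫ y, v y ∂μ) + d * (d - 1) / 2 * ∫ y, u y ^ 2 ∂μ
  have expansion : ∀ t : ℝ, ∫ y, (1 + t * u y + t ^ 2 * v y) ^ d ∂μ =
      μ.real Set.univ + t ^ 2 * L + t ^ 3 * ∫ y, R (t, u y, v y) ∂μ := by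
    intro t
    have : Continuous fun y => R (t, u y, v y) := by fun_prop
    have int {f : Y → ℝ} (hf : Continuous f) : Integrable f μ := integrable_of_continuous hf
    simp only [hpow]
    rw [integral_add (int (by fun_prop)) (int (by fun_prop)),
      integral_add (int (by fun_prop)) (int (by fun_prop)),
      integral_add (int (by fun_prop)) (int (by fun_prop)), integral_const_mul,
      integral_const_mul, integral_const_mul, integral_const_mul,
      integral_add (int (by fun_prop)) (int (by fun_prop)), integral_const_mul,
      integral_const_mul, hu₀, integral_const]
    simp [L]
  have limit : Filter.Tendsto (fun t : ℝ => L + t * ∫ y, R (t, u y, v y) ∂μ) (𝓝[≠] 0) (𝓝 L) :=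
    (Continuous.tendsto' (by fun_prop) 0 L (by simp)).mono_left nhdsWithin_le_nhds
  refine limit.congr' ?_
  filter_upwards [self_mem_nhdsWithin] with t ht
  rw [expansion, eq_div_iff (pow_ne_zero 2 ht)]
  ring

lemma le_of_mul_le_sq_of_tendsto {P P' Q : ℝ → ℝ} {W p q : ℝ} (hW : 0 < W)
    (hP : Filter.Tendsto (fun t => (P t - W) / t ^ 2) (𝓝[≠] 0) (𝓝 p))
    (hP' : Filter.Tendsto (fun t => (P' t - W) / t ^ 2) (𝓝[≠] 0) (𝓝 p))
    (hQ : Filter.Tendsto (fun t => (Q t - W) / t ^ 2) (𝓝[≠] 0) (𝓝 q))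
    (hPQ : ∀ᶠ t in 𝓝[≠] 0, P t * P' t ≤ Q t ^ 2) : p ≤ q := by
  have ht : Filter.Tendsto (fun t : ℝ => t ^ 2) (𝓝[≠] 0) (𝓝 0) :=
    (Continuous.tendsto' (by fun_prop) 0 0 (by simp)).mono_left nhdsWithin_le_nhds
  have lhs := ((hP.add hP').const_mul W).add ((ht.mul hP).mul hP')
  have rhs := (hQ.const_mul (2 * W)).add (ht.mul (hQ.pow 2))
  have := le_of_tendsto_of_tendsto lhs rhs (by
    filter_upwards [hPQ, self_mem_nhdsWithin] with t h (ht : t ≠ 0)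
    calc _ = (P t * P' t - W ^ 2) / t ^ 2 := by field_simp; ring
      _ ≤ (Q t ^ 2 - W ^ 2) / t ^ 2 := by gcongr
      _ = _ := by field_simp; ring)
  nlinarith

theorem le_of_integral_pow_mul_integral_pow_le {u v w : Y → ℝ} (hu : Continuous u)
    (hv : Continuous v) (hw : Continuous w) [NeZero μ] (hu₀ : ∫ y, u y ∂μ = 0) (d : ℕ)
    (h : ∀ᶠ t in 𝓝[≠] (0 : ℝ), (∫ y, (1 + t * u y + t ^ 2 * v y) ^ d ∂μ) *
      ∫ y, (1 - t * u y + t ^ 2 * v y) ^ d ∂μ ≤ (∫ y, (1 + t ^ 2 * w y) ^ d ∂μ) ^ 2) :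
    d * (∫ y, v y ∂μ) + d * (d - 1) / 2 * ∫ y, u y ^ 2 ∂μ ≤ d * ∫ y, w y ∂μ := by
  refine le_of_mul_le_sq_of_tendsto (measureReal_univ_pos)
    (tendsto_integral_pow_sub_div_sq hu hv hu₀ d) ?_ ?_ h
  · simpa [sub_eq_add_neg] using tendsto_integral_pow_sub_div_sq (u := fun y => -u y) hu.neg hv
      (by rw [integral_neg, hu₀, neg_zero]) d
  · simpa using tendsto_integral_pow_sub_div_sq (μ := μ) (continuous_const (y := (0 : ℝ))) hw
      (by simp) d

end Integral

end Calculus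

section SupportFunction

variable {n : ℕ} {K : Set (Eu n)}

lemma inner_le_sfn (hK : IsCompact K) {y : Eu n} (hy : y ∈ K) (z : Eu n) : ⟪z, y⟫_ℝ ≤ sfn K z :=
  le_csSup (hK.image (by fun_prop)).bddAbove ⟨y, hy, rfl⟩

lemma exists_mem_inner_eq_sfn (hK : IsCompact K) (hne : K.Nonempty) (z : Eu n) :
    ∃ p ∈ K, ⟪z, p⟫_ℝ = sfn K z := by
  obtain ⟨p, hp, h⟩ := hK.exists_sSup_image_eq hne (f := fun y => ⟪z, y⟫_ℝ) (by fun_prop)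
  exact ⟨p, hp, h.symm⟩

lemma sfn_smul (hK : IsCompact K) (hne : K.Nonempty) {r : ℝ} (hr : 0 ≤ r) (z : Eu n) :
    sfn K (r • z) = r * sfn K z := by
  apply le_antisymm
  · obtain ⟨p, hp, h⟩ := exists_mem_inner_eq_sfn hK hne (r • z)
    rw [← h, real_inner_smul_left]
    exact mul_le_mul_of_nonneg_left (inner_le_sfn hK hp z) hr
  · obtain ⟨p, hp, h⟩ := exists_mem_inner_eq_sfn hK hne z
    rw [← h, ← real_inner_smul_left]
    exact inner_le_sfn hK hp _

lemma sfn_zero (hne : K.Nonempty) : sfn K 0 = 0 := by simp [sfn, hne.image_const]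

lemma sfn_add_le (hK : IsCompact K) (hne : K.Nonempty) (z w : Eu n) :
    sfn K (z + w) ≤ sfn K z + sfn K w := by
  obtain ⟨p, hp, h⟩ := exists_mem_inner_eq_sfn hK hne (z + w)
  rw [← h, inner_add_left]
  exact add_le_add (inner_le_sfn hK hp z) (inner_le_sfn hK hp w)

/-- The inverse Gauss map `∇h_K`: it sends a direction `z` to the boundary point of `K` with outer
normal `z`, provided `h_K` is differentiable at `z`. -/
def invGauss (K : Set (Eu n)) (z : Eu n) : Eu n := gradient (sfn K) z

lemma invGauss_eq_of_inner_eq_sfn {z p : Eu n} (hd : DifferentiableAt ℝ (sfn K) z)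
    (hp : ∀ w, ⟪w, p⟫_ℝ ≤ sfn K w) (h : ⟪z, p⟫_ℝ = sfn K z) : invGauss K z = p := by
  have hmin : IsLocalMin (fun w => sfn K w - ⟪p, w⟫_ℝ) z := .of_forall fun w => by
    have hw := hp w
    rw [real_inner_comm] at h hw
    linarith
  have hderiv := hd.hasGradientAt.hasFDerivAt.sub (innerSL ℝ p).hasFDerivAt
  have h0 := hmin.hasFDerivAt_eq_zero hderiv
  refine ext_inner_right ℝ fun v => ?_
  simpa [sub_eq_zero, invGauss] using DFunLike.congr_fun h0 v

end SupportFunction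

lemma hasDerivAt_comp_line {E F : Type*} [NormedAddCommGroup E] [NormedSpace ℝ E]
    [NormedAddCommGroup F] [NormedSpace ℝ F] {f : E → F} {f' : E →L[ℝ] F} {z v : E} {t : ℝ}
    (hf : HasFDerivAt f f' (z + t • v)) : HasDerivAt (fun s : ℝ => f (z + s • v)) (f' v) t := by
  have hline : HasDerivAt (fun s : ℝ => z + s • v) v t := by
    simpa using ((hasDerivAt_id t).smul_const v).const_add z
  exact hf.comp_hasDerivAt t hline

lemma exists_norm_smul_sphere_eq {E : Type*} [NormedAddCommGroup E] [NormedSpace ℝ E] {z : E}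
    (hz : z ≠ 0) : ∃ x : sphere (0 : E) 1, ‖z‖ • (x : E) = z :=
  ⟨⟨‖z‖⁻¹ • z, by simp [norm_smul, hz]⟩, by simp [smul_smul, hz]⟩

lemma continuous_comp_sph {n : ℕ} {Y : Type*} [TopologicalSpace Y] {g : Eu n → Y}
    (hg : ∀ z ≠ 0, ContinuousAt g z) : Continuous fun x : Sph n => g x :=
  continuous_iff_continuousAt.2 fun x =>
    (hg x (ne_zero_of_mem_unit_sphere x)).comp continuous_subtype_val.continuousAt

namespace IsSmoothConvexBody

variable {n : ℕ} {K : Set (Eu n)}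

lemma nonempty (hK : IsSmoothConvexBody K) : K.Nonempty :=
  hK.interior_nonempty.mono interior_subset

lemma sfn_pos (hK : IsSmoothConvexBody K) {z : Eu n} (hz : z ≠ 0) : 0 < sfn K z := by
  obtain ⟨x, hx⟩ := exists_norm_smul_sphere_eq hz
  rw [← hx, sfn_smul hK.compact hK.nonempty (norm_nonneg z)]
  exact mul_pos (norm_pos_iff.2 hz) (hK.pos x)

lemma contDiffAt_sfn (hK : IsSmoothConvexBody K) {z : Eu n} (hz : z ≠ 0) :
    ContDiffAt ℝ (⊤ : ℕ∞) (sfn K) z :=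
  (hK.smooth z hz).contDiffAt (isOpen_compl_singleton.mem_nhds hz)

lemma differentiableAt_sfn (hK : IsSmoothConvexBody K) {z : Eu n} (hz : z ≠ 0) :
    DifferentiableAt ℝ (sfn K) z :=
  (hK.contDiffAt_sfn hz).differentiableAt (by simp)

lemma hasFDerivAt_sfn (hK : IsSmoothConvexBody K) {z : Eu n} (hz : z ≠ 0) :
    HasFDerivAt (sfn K) (innerSL ℝ (invGauss K z)) z :=
  (hK.differentiableAt_sfn hz).hasGradientAt.hasFDerivAt

lemma invGauss_eq (hK : IsSmoothConvexBody K) {z p : Eu n} (hz : z ≠ 0) (hp : p ∈ K)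
    (h : ⟪z, p⟫_ℝ = sfn K z) : invGauss K z = p :=
  invGauss_eq_of_inner_eq_sfn (hK.differentiableAt_sfn hz) (inner_le_sfn hK.compact hp) h

lemma invGauss_mem (hK : IsSmoothConvexBody K) {z : Eu n} (hz : z ≠ 0) : invGauss K z ∈ K := by
  obtain ⟨p, hp, h⟩ := exists_mem_inner_eq_sfn hK.compact hK.nonempty z
  rwa [hK.invGauss_eq hz hp h]

lemma inner_invGauss_self (hK : IsSmoothConvexBody K) {z : Eu n} (hz : z ≠ 0) :
    ⟪z, invGauss K z⟫_ℝ = sfn K z := by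
  obtain ⟨p, hp, h⟩ := exists_mem_inner_eq_sfn hK.compact hK.nonempty z
  rwa [hK.invGauss_eq hz hp h]

lemma inner_invGauss_le (hK : IsSmoothConvexBody K) {y : Eu n} (hy : y ≠ 0) (z : Eu n) :
    ⟪z, invGauss K y⟫_ℝ ≤ sfn K z :=
  inner_le_sfn hK.compact (hK.invGauss_mem hy) z

lemma invGauss_smul (hK : IsSmoothConvexBody K) {z : Eu n} (hz : z ≠ 0) {r : ℝ} (hr : 0 < r) :
    invGauss K (r • z) = invGauss K z := by
  refine hK.invGauss_eq (smul_ne_zero hr.ne' hz) (hK.invGauss_mem hz) ?_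
  rw [real_inner_smul_left, hK.inner_invGauss_self hz, sfn_smul hK.compact hK.nonempty hr.le]

lemma contDiffAt_invGauss (hK : IsSmoothConvexBody K) {z : Eu n} (hz : z ≠ 0) :
    ContDiffAt ℝ (⊤ : ℕ∞) (invGauss K) z :=
  (InnerProductSpace.toDual ℝ (Eu n)).symm.contDiff.contDiffAt.comp z
    ((hK.contDiffAt_sfn hz).fderiv_right (by simp))

lemma hasFDerivAt_invGauss (hK : IsSmoothConvexBody K) {z : Eu n} (hz : z ≠ 0) :
    HasFDerivAt (invGauss K) (hessA K z) z :=
  ((hK.contDiffAt_invGauss hz).differentiableAt (by simp)).hasFDerivAt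

lemma continuousAt_hessA (hK : IsSmoothConvexBody K) {z : Eu n} (hz : z ≠ 0) :
    ContinuousAt (hessA K) z :=
  ((hK.contDiffAt_invGauss hz).fderiv_right (m := 0) (by simp)).continuousAt

lemma hessA_apply_self (hK : IsSmoothConvexBody K) {z : Eu n} (hz : z ≠ 0) :
    hessA K z z = 0 := by
  have hderiv : HasDerivAt (fun s : ℝ => invGauss K (z + s • z)) (hessA K z z) 0 := by
    simpa using hasDerivAt_comp_line (z := z) (v := z) (t := 0)
      (by simpa using hK.hasFDerivAt_invGauss hz)
  have hconst : (fun s : ℝ => invGauss K (z + s • z)) =ᶠ[𝓝 0] fun _ => invGauss K z := by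
    filter_upwards [lt_mem_nhds (neg_lt_zero.2 (zero_lt_one' ℝ))] with s hs
    rw [← hK.invGauss_smul hz (by linarith : 0 < 1 + s), add_smul, one_smul]
  exact hderiv.unique ((hasDerivAt_const _ _).congr_of_eventuallyEq hconst)

lemma hessA_smul (hK : IsSmoothConvexBody K) {z : Eu n} (hz : z ≠ 0) {r : ℝ} (hr : 0 < r) :
    hessA K (r • z) = r⁻¹ • hessA K z := by
  have hcomp : HasFDerivAt (fun w => invGauss K (r • w)) (r • hessA K (r • z)) z := by
    have := (hK.hasFDerivAt_invGauss (smul_ne_zero hr.ne' hz)).comp z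
      ((hasFDerivAt_id z).const_smul r)
    rwa [ContinuousLinearMap.comp_smul, ContinuousLinearMap.comp_id] at this
  have heq : (fun w => invGauss K (r • w)) =ᶠ[𝓝 z] invGauss K := by
    filter_upwards [isOpen_compl_singleton.mem_nhds hz] with w hw
    exact hK.invGauss_smul hw hr
  rw [← hcomp.unique ((hK.hasFDerivAt_invGauss hz).congr_of_eventuallyEq heq),
    inv_smul_smul₀ hr.ne']

lemma inner_hessA_apply (hK : IsSmoothConvexBody K) {z : Eu n} (hz : z ≠ 0) (v : Eu n) :
    ⟪z, hessA K z v⟫_ℝ = 0 := by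
  have hinner := (hasFDerivAt_id z).inner ℝ (hK.hasFDerivAt_invGauss hz)
  have heq : sfn K =ᶠ[𝓝 z] fun w => ⟪w, invGauss K w⟫_ℝ := by
    filter_upwards [isOpen_compl_singleton.mem_nhds hz] with w hw
    exact (hK.inner_invGauss_self hw).symm
  have := DFunLike.congr_fun ((hinner.congr_of_eventuallyEq heq).unique (hK.hasFDerivAt_sfn hz)) v
  simpa [real_inner_comm v] using this

lemma continuous_sfn (hK : IsSmoothConvexBody K) : Continuous fun x : Sph n => sfn K x :=
  continuous_comp_sph fun _ hz => (hK.contDiffAt_sfn hz).continuousAt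

lemma continuous_invGauss (hK : IsSmoothConvexBody K) :
    Continuous fun x : Sph n => invGauss K x :=
  continuous_comp_sph fun _ hz => (hK.contDiffAt_invGauss hz).continuousAt

lemma continuous_hessA (hK : IsSmoothConvexBody K) : Continuous fun x : Sph n => hessA K x :=
  continuous_comp_sph fun _ hz => hK.continuousAt_hessA hz

lemma hessA_eq_hessA_add_tens (hK : IsSmoothConvexBody K) (x : Sph n) (v : Eu n) :
    hessA K x v = (hessA K x + tens (x : Eu n)) (v - ⟪(x : Eu n), v⟫_ℝ • (x : Eu n)) := by
  simp [tens, inner_sub_right, inner_smul_right, hK.hessA_apply_self (ne_zero_of_mem_unit_sphere x)]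

lemma eq_inner_smul_of_hessA_eq_zero (hK : IsSmoothConvexBody K) {x : Sph n} {v : Eu n}
    (hv : hessA K x v = 0) : v = ⟪(x : Eu n), v⟫_ℝ • (x : Eu n) := by
  by_contra hne
  have := hK.posdef x _ (sub_ne_zero.2 hne)
  rw [← hK.hessA_eq_hessA_add_tens, hv, inner_zero_left] at this
  exact this.false

lemma inner_hessA_nonneg (hK : IsSmoothConvexBody K) (x : Sph n) (v : Eu n) :
    0 ≤ ⟪hessA K x v, v⟫_ℝ := by
  set u := v - ⟪(x : Eu n), v⟫_ℝ • (x : Eu n) with hu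
  have hxA : ⟪hessA K x v, x⟫_ℝ = 0 := by
    rw [real_inner_comm, hK.inner_hessA_apply (ne_zero_of_mem_unit_sphere x)]
  have huv : ⟪hessA K x v, v⟫_ℝ = ⟪(hessA K x + tens (x : Eu n)) u, u⟫_ℝ := by
    rw [← hK.hessA_eq_hessA_add_tens, hu, inner_sub_right, inner_smul_right, hxA, mul_zero,
      sub_zero]
  rw [huv]
  rcases eq_or_ne u 0 with h0 | h0
  · simp [h0]
  · exact (hK.posdef x u h0).le

end IsSmoothConvexBody

section PolarCoordinates

lemma det_pos_of_forall_inner_pos {E : Type*} [NormedAddCommGroup E] [InnerProductSpace ℝ E]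
    [FiniteDimensional ℝ E] {L : E →L[ℝ] E} (hL : ∀ v ≠ 0, 0 < ⟪L v, v⟫_ℝ) : 0 < L.det := by
  let path : ℝ → E →L[ℝ] E := fun t => (1 - t) • .id ℝ E + t • L
  have hcont : ContinuousOn (fun t => (path t).det) (Set.Icc 0 1) :=
    (ContinuousLinearMap.continuous_det.comp (by fun_prop)).continuousOn
  have hdet : ∀ t ∈ Set.Icc (0 : ℝ) 1, (path t).det ≠ 0 := by
    intro t ht h0
    obtain ⟨v, hv, hv0⟩ := Submodule.exists_mem_ne_zero_of_ne_bot
      (LinearMap.bot_lt_ker_of_det_eq_zero h0).ne'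
    have hquad : ⟪path t v, v⟫_ℝ = (1 - t) * ‖v‖ ^ 2 + t * ⟪L v, v⟫_ℝ := by
      simp [path, inner_add_left, real_inner_smul_left]
    rw [show path t v = 0 from hv, inner_zero_left] at hquad
    rcases ht.1.eq_or_lt with rfl | ht0
    · simp [eq_comm, hv0] at hquad
    · nlinarith [mul_pos ht0 (hL v hv0), mul_nonneg (sub_nonneg.2 ht.2) (sq_nonneg ‖v‖)]
  have h0 : (path 0).det = 1 := by simp [path, ContinuousLinearMap.det]
  have h1 : path 1 = L := by simp [path]
  by_contra! hneg
  obtain ⟨t, ht, htdet⟩ := intermediate_value_Icc' zero_le_one hcont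
    (show (0 : ℝ) ∈ Set.Icc _ _ by simpa only [h0, h1] using ⟨hneg, zero_le_one⟩)
  exact hdet t ht htdet

lemma measurableEmbedding_smul_sphere {E : Type*} [NormedAddCommGroup E] [NormedSpace ℝ E]
    [MeasurableSpace E] [BorelSpace E] :
    MeasurableEmbedding fun p : sphere (0 : E) 1 × Set.Ioi (0 : ℝ) => (p.2 : ℝ) • (p.1 : E) :=
  (MeasurableEmbedding.subtype_coe (measurableSet_singleton (0 : E)).compl).comp
    (homeomorphUnitSphereProd E).symm.measurableEmbedding

lemma measurePreserving_smul_sphere {E : Type*} [NormedAddCommGroup E] [NormedSpace ℝ E]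
    [FiniteDimensional ℝ E] [Nontrivial E] [MeasurableSpace E] [BorelSpace E] (μ : Measure E)
    [μ.IsAddHaarMeasure] :
    MeasurePreserving (fun p : sphere (0 : E) 1 × Set.Ioi (0 : ℝ) => (p.2 : ℝ) • (p.1 : E))
      (μ.toSphere.prod (Measure.volumeIoiPow (Module.finrank ℝ E - 1))) μ := by
  have hpolar := μ.measurePreserving_homeomorphUnitSphereProd.symm
    (homeomorphUnitSphereProd E).toMeasurableEquiv
  have hcoe := measurePreserving_subtype_coe (μa := μ) (measurableSet_singleton (0 : E)).compl
  rw [restrict_compl_singleton] at hcoe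
  exact hcoe.comp hpolar

lemma hasFDerivAt_norm {E : Type*} [NormedAddCommGroup E] [InnerProductSpace ℝ E] {z : E}
    (hz : z ≠ 0) : HasFDerivAt (fun w : E => ‖w‖) (‖z‖⁻¹ • innerSL ℝ z) z := by
  have hsqrt := (hasStrictFDerivAt_norm_sq z).hasFDerivAt.sqrt (by simpa using hz)
  simp only [Real.sqrt_sq (norm_nonneg _)] at hsqrt
  convert hsqrt using 1
  ext v
  simp only [smul_apply, coe_innerSL_apply, smul_eq_mul, one_div,
    mul_inv_rev, nsmul_eq_mul, Nat.cast_ofNat]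
  ring

/-- Polar coordinates based on the boundary of `K` rather than on the sphere: the positively
homogeneous extension of `∇h_K` from `S^n`. -/
def polarMap {n : ℕ} (K : Set (Eu n)) (z : Eu n) : Eu n := ‖z‖ • invGauss K z

end PolarCoordinates

namespace IsSmoothConvexBody

variable {n : ℕ} {K : Set (Eu n)}

lemma rK_pos (hK : IsSmoothConvexBody K) (x : Sph n) : 0 < rK K x :=
  det_pos_of_forall_inner_pos (hK.posdef x)

lemma dens_pos (hK : IsSmoothConvexBody K) (x : Sph n) : 0 < dens K x :=
  mul_pos (hK.pos x) (hK.rK_pos x)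

lemma continuous_dens (hK : IsSmoothConvexBody K) : Continuous fun x : Sph n => dens K x := by
  have htens : Continuous fun x : Sph n => tens (x : Eu n) :=
    (ContinuousLinearMap.smulRightL ℝ (Eu n) (Eu n)).continuous₂.comp
      (((innerSL ℝ).continuous.comp continuous_subtype_val).prodMk continuous_subtype_val)
  exact hK.continuous_sfn.mul
    (ContinuousLinearMap.continuous_det.comp (hK.continuous_hessA.add htens))

lemma hessA_eq_zero_of_invGauss_eq (hK : IsSmoothConvexBody K) {x y : Sph n}
    (h : invGauss K x = invGauss K y) : hessA K x y = 0 := by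
  have hx0 := ne_zero_of_mem_unit_sphere x
  have hy0 := ne_zero_of_mem_unit_sphere y
  have hne : ∀ᶠ t : ℝ in 𝓝 0, (x : Eu n) + t • (y : Eu n) ≠ 0 :=
    ContinuousAt.eventually_ne (by fun_prop) (by simpa using hx0)
  have hconst : ∀ᶠ t : ℝ in 𝓝[≥] 0, invGauss K (x + t • (y : Eu n)) = invGauss K x := by
    filter_upwards [hne.filter_mono nhdsWithin_le_nhds, self_mem_nhdsWithin] with t hne ht
    have ht : 0 ≤ t := ht
    refine hK.invGauss_eq hne (hK.invGauss_mem hx0)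
      ((hK.inner_invGauss_le hx0 _).antisymm ((sfn_add_le hK.compact hK.nonempty _ _).trans ?_))
    rw [sfn_smul hK.compact hK.nonempty ht, inner_add_left, real_inner_smul_left,
      hK.inner_invGauss_self hx0, h, hK.inner_invGauss_self hy0]
  have hderiv : HasDerivAt (fun t : ℝ => invGauss K (x + t • (y : Eu n))) (hessA K x y) 0 :=
    hasDerivAt_comp_line (by simpa using hK.hasFDerivAt_invGauss hx0)
  exact (uniqueDiffWithinAt_Ici (0 : ℝ)).eq_deriv _ hderiv.hasDerivWithinAt
    ((hasDerivWithinAt_const 0 _ (invGauss K x)).congr_of_eventuallyEq hconst (by simp))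

lemma injective_invGauss (hK : IsSmoothConvexBody K) :
    Function.Injective fun x : Sph n => invGauss K x := by
  intro x y h
  have hx := hK.inner_invGauss_self (ne_zero_of_mem_unit_sphere x)
  have hy := hK.inner_invGauss_self (ne_zero_of_mem_unit_sphere y)
  have hyx := hK.eq_inner_smul_of_hessA_eq_zero (hK.hessA_eq_zero_of_invGauss_eq h)
  set c := ⟪(x : Eu n), y⟫_ℝ
  have hc : 0 < c := by
    have hxy : c * sfn K x = sfn K y := by
      rw [← hx, ← hy, ← real_inner_smul_left, ← hyx, show invGauss K x = invGauss K y from h]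
    exact pos_of_mul_pos_left (hxy ▸ hK.pos y) (hK.pos x).le
  have hc1 : c = 1 := by
    have := congrArg norm hyx
    rwa [norm_smul, norm_eq_of_mem_sphere, norm_eq_of_mem_sphere, mul_one, norm_of_nonneg hc.le,
      eq_comm] at this
  rw [hc1, one_smul] at hyx
  exact Subtype.ext hyx.symm

lemma smul_invGauss_inj (hK : IsSmoothConvexBody K) {x y : Sph n} {s t : ℝ} (hs : 0 < s)
    (ht : 0 < t) (h : s • invGauss K x = t • invGauss K y) : x = y ∧ s = t := by
  have hle : ∀ {x y : Sph n} {s t : ℝ}, 0 < t → s • invGauss K x = t • invGauss K y → s ≤ t := by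
    intro x y s t ht h
    refine le_of_mul_le_mul_right ?_ (hK.pos x)
    rw [← hK.inner_invGauss_self (ne_zero_of_mem_unit_sphere x), ← real_inner_smul_right, h,
      real_inner_smul_right, hK.inner_invGauss_self (ne_zero_of_mem_unit_sphere x)]
    exact mul_le_mul_of_nonneg_left
      (hK.inner_invGauss_le (ne_zero_of_mem_unit_sphere y) _) ht.le
  obtain rfl : s = t := (hle ht h).antisymm (hle hs h.symm)
  exact ⟨hK.injective_invGauss (smul_right_injective _ hs.ne' h), rfl⟩

lemma polarMap_smul (hK : IsSmoothConvexBody K) (x : Sph n) {s : ℝ} (hs : 0 < s) :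
    polarMap K (s • (x : Eu n)) = s • invGauss K x := by
  rw [polarMap, hK.invGauss_smul (ne_zero_of_mem_unit_sphere x) hs, norm_smul,
    norm_eq_of_mem_sphere, mul_one, norm_of_nonneg hs.le]

lemma injOn_polarMap (hK : IsSmoothConvexBody K) : Set.InjOn (polarMap K) {(0 : Eu n)}ᶜ := by
  intro z hz w hw h
  obtain ⟨x, hx⟩ := exists_norm_smul_sphere_eq hz
  obtain ⟨y, hy⟩ := exists_norm_smul_sphere_eq hw
  rw [← hx, ← hy, hK.polarMap_smul x (norm_pos_iff.2 hz),
    hK.polarMap_smul y (norm_pos_iff.2 hw)] at h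
  obtain ⟨rfl, hzw⟩ := hK.smul_invGauss_inj (norm_pos_iff.2 hz) (norm_pos_iff.2 hw) h
  rw [← hx, ← hy, hzw]

lemma exists_smul_invGauss_eq (hK : IsSmoothConvexBody K) {w : Eu n} (hw : w ≠ 0) :
    ∃ x : Sph n, ∃ s : ℝ, 0 < s ∧ s • invGauss K x = w := by
  obtain ⟨x₀, -⟩ := exists_norm_smul_sphere_eq hw
  have hcont : Continuous fun x : Sph n => ⟪(x : Eu n), w⟫_ℝ / sfn K x :=
    Continuous.div (by fun_prop) hK.continuous_sfn fun x => (hK.pos x).ne'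
  obtain ⟨x, -, hx⟩ := isCompact_univ.exists_isMaxOn ⟨x₀, Set.mem_univ _⟩ hcont.continuousOn
  set s := ⟪(x : Eu n), w⟫_ℝ / sfn K x with hs
  have hle : ∀ z, ⟪z, w⟫_ℝ ≤ s * sfn K z := by
    intro z
    rcases eq_or_ne z 0 with rfl | hz
    · simp [sfn_zero hK.nonempty]
    · obtain ⟨y, hy⟩ := exists_norm_smul_sphere_eq hz
      have hmax := (div_le_iff₀ (hK.pos y)).1 (hx (Set.mem_univ y))
      rw [← hy, real_inner_smul_left, sfn_smul hK.compact hK.nonempty (norm_nonneg z),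
        mul_left_comm]
      exact mul_le_mul_of_nonneg_left hmax (norm_nonneg z)
  have hs0 : 0 < s :=
    pos_of_mul_pos_left ((real_inner_self_pos.2 hw).trans_le (hle w)) (hK.sfn_pos hw).le
  refine ⟨x, s, hs0, ?_⟩
  rw [← eq_inv_smul_iff₀ hs0.ne']
  refine invGauss_eq_of_inner_eq_sfn
    (hK.differentiableAt_sfn (ne_zero_of_mem_unit_sphere x)) (fun z => ?_) ?_
  · rw [real_inner_smul_right, inv_mul_le_iff₀ hs0]
    exact hle z
  · rw [real_inner_smul_right, inv_mul_eq_iff_eq_mul₀ hs0.ne', hs,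
      div_mul_cancel₀ _ (hK.pos x).ne']

lemma image_polarMap (hK : IsSmoothConvexBody K) :
    polarMap K '' {(0 : Eu n)}ᶜ = {(0 : Eu n)}ᶜ := by
  ext w
  constructor
  · rintro ⟨z, hz, rfl⟩
    have hne : invGauss K z ≠ 0 := fun h0 => by
      simpa [h0, (hK.sfn_pos hz).ne] using hK.inner_invGauss_self hz
    exact smul_ne_zero (norm_ne_zero_iff.2 hz) hne
  · intro hw
    obtain ⟨x, s, hs, rfl⟩ := hK.exists_smul_invGauss_eq hw
    exact ⟨s • (x : Eu n), smul_ne_zero hs.ne' (ne_zero_of_mem_unit_sphere x),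
      hK.polarMap_smul x hs⟩

lemma hasFDerivAt_polarMap (hK : IsSmoothConvexBody K) {z : Eu n} (hz : z ≠ 0) :
    HasFDerivAt (polarMap K)
      (‖z‖ • hessA K z + (‖z‖⁻¹ • innerSL ℝ z).smulRight (invGauss K z)) z :=
  (hasFDerivAt_norm hz).smul (hK.hasFDerivAt_invGauss hz)

lemma det_fderiv_polarMap (hK : IsSmoothConvexBody K) (x : Sph n) {s : ℝ} (hs : 0 < s) :
    (fderiv ℝ (polarMap K) (s • (x : Eu n))).det = dens K x := by
  have hx := ne_zero_of_mem_unit_sphere x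
  have hfactor : (fderiv ℝ (polarMap K) (s • (x : Eu n)) : Eu n →ₗ[ℝ] Eu n) =
      LinearMap.transvection (innerSL ℝ (x : Eu n)).toLinearMap (invGauss K x - x) ∘ₗ
        (hessA K x + tens (x : Eu n) : Eu n →L[ℝ] Eu n) := by
    ext1 v
    rw [(hK.hasFDerivAt_polarMap (smul_ne_zero hs.ne' hx)).fderiv, hK.hessA_smul hx hs,
      hK.invGauss_smul hx hs]
    simp [norm_smul, abs_of_pos hs, hs.ne', smul_smul, tens, LinearMap.transvection,
      inner_add_right, inner_smul_right, hK.inner_hessA_apply hx, smul_sub]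
  rw [ContinuousLinearMap.det, hfactor, LinearMap.det_comp, LinearMap.transvection.det]
  simp [inner_sub_right, hK.inner_invGauss_self hx, dens, rK]

end IsSmoothConvexBody

section ConeMeasure

variable {n : ℕ} {K : Set (Eu n)}

instance : IsFiniteMeasure (sphMeas n) := inferInstanceAs (IsFiniteMeasure (Measure.toSphere _))

instance : NeZero (sphMeas n) := ⟨Measure.toSphere_ne_zero _⟩

/-- The measure `dV` on `S^n`: up to the factor `1/(n+1)`, the cone-volume measure of `K`. -/
def coneMeas (K : Set (Eu n)) : Measure (Sph n) :=
  (sphMeas n).withDensity fun x => ENNReal.ofReal (dens K x)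

/-- The union over `y` of the open segments from `0` to `ρ y • φ y`. -/
def radialRegion {Y E : Type*} [AddCommGroup E] [Module ℝ E] (φ : Y → E) (ρ : Y → ℝ) : Set E :=
  (fun p : Y × Set.Ioi (0 : ℝ) => (p.2 : ℝ) • φ p.1) '' {p | p.2 < ρ p.1}

end ConeMeasure

namespace IsSmoothConvexBody

variable {n : ℕ} {K : Set (Eu n)}

lemma map_polarMap_withDensity (hK : IsSmoothConvexBody K) :
    (volume.withDensity fun z => ENNReal.ofReal |(fderiv ℝ (polarMap K) z).det|).map (polarMap K) =
      volume := by
  have := map_withDensity_abs_det_fderiv_eq_addHaar (volume : Measure (Eu n))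
    (measurableSet_singleton (0 : Eu n)).compl.nullMeasurableSet
    (fun z hz => (hK.hasFDerivAt_polarMap hz).differentiableAt.hasFDerivAt.hasFDerivWithinAt)
    hK.injOn_polarMap
  rwa [hK.image_polarMap, restrict_compl_singleton] at this

lemma measurable_polarMap (hK : IsSmoothConvexBody K) : Measurable (polarMap K) :=
  measurable_of_continuousOn_compl_singleton 0 fun _ hz =>
    (hK.hasFDerivAt_polarMap hz).continuousAt.continuousWithinAt

lemma measurePreserving_smul_invGauss (hK : IsSmoothConvexBody K) :
    MeasurePreserving (fun p : Sph n × Set.Ioi (0 : ℝ) => (p.2 : ℝ) • invGauss K p.1)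
      ((coneMeas K).prod (Measure.volumeIoiPow n)) volume := by
  set polar := fun p : Sph n × Set.Ioi (0 : ℝ) => (p.2 : ℝ) • (p.1 : Eu n)
  set J := fun z => ENNReal.ofReal |(fderiv ℝ (polarMap K) z).det|
  have hpolar : MeasurePreserving polar ((sphMeas n).prod (Measure.volumeIoiPow n)) volume := by
    simpa [sphMeas] using measurePreserving_smul_sphere (volume : Measure (Eu n))
  have hcone : (coneMeas K).prod (Measure.volumeIoiPow n) =
      ((sphMeas n).prod (Measure.volumeIoiPow n)).withDensity (J ∘ polar) := by
    rw [coneMeas, prod_withDensity_left hK.continuous_dens.measurable.ennreal_ofReal]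
    congr with p
    simp only [J, polar, Function.comp, hK.det_fderiv_polarMap p.1 p.2.2,
      abs_of_pos (hK.dens_pos p.1)]
  have hJ : MeasurePreserving polar ((coneMeas K).prod (Measure.volumeIoiPow n))
      (volume.withDensity J) := by
    refine ⟨hpolar.measurable, Measure.ext fun s hs => ?_⟩
    rw [Measure.map_apply hpolar.measurable hs, hcone, withDensity_apply _ hs,
      withDensity_apply _ (hpolar.measurable hs)]
    exact hpolar.setLIntegral_comp_preimage_emb measurableEmbedding_smul_sphere J s
  have hcomp := (⟨hK.measurable_polarMap, hK.map_polarMap_withDensity⟩ :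
    MeasurePreserving (polarMap K) (volume.withDensity J) volume).comp hJ
  convert hcomp using 1
  ext1 p
  exact (hK.polarMap_smul p.1 p.2.2).symm

lemma measurableEmbedding_smul_invGauss (hK : IsSmoothConvexBody K) :
    MeasurableEmbedding fun p : Sph n × Set.Ioi (0 : ℝ) => (p.2 : ℝ) • invGauss K p.1 := by
  have : PolishSpace (Set.Ioi (0 : ℝ)) := isOpen_Ioi.polishSpace
  refine Continuous.measurableEmbedding ?_ ?_
  · exact (continuous_subtype_val.comp continuous_snd).smul
      (hK.continuous_invGauss.comp continuous_fst)
  · intro p q h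
    obtain ⟨hpq, hst⟩ := hK.smul_invGauss_inj p.2.2 q.2.2 h
    exact Prod.ext hpq (Subtype.ext hst)

lemma isFiniteMeasure_coneMeas (hK : IsSmoothConvexBody K) : IsFiniteMeasure (coneMeas K) :=
  isFiniteMeasure_withDensity_ofReal (integrable_of_continuous hK.continuous_dens).2

lemma neZero_coneMeas (hK : IsSmoothConvexBody K) : NeZero (coneMeas K) := by
  have hac : sphMeas n ≪ coneMeas K :=
    withDensity_absolutelyContinuous' hK.continuous_dens.measurable.ennreal_ofReal.aemeasurable
      (ae_of_all _ fun x => (ENNReal.ofReal_pos.2 (hK.dens_pos x)).ne')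
  exact ⟨fun h0 => NeZero.ne (sphMeas n) (Measure.absolutelyContinuous_zero_iff.1 (h0 ▸ hac))⟩

lemma measurableSet_radialRegion (hK : IsSmoothConvexBody K) {ρ : Sph n → ℝ} (hρ : Measurable ρ) :
    MeasurableSet (radialRegion (fun x : Sph n => invGauss K x) ρ) :=
  hK.measurableEmbedding_smul_invGauss.measurableSet_image.2
    (measurableSet_lt (by fun_prop) (by fun_prop))

lemma volume_radialRegion (hK : IsSmoothConvexBody K) {ρ : Sph n → ℝ} (hρ : Continuous ρ)
    (hρ₀ : ∀ x, 0 < ρ x) :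
    volume (radialRegion (fun x : Sph n => invGauss K x) ρ) =
      ENNReal.ofReal ((∫ x, ρ x ^ (n + 1) ∂coneMeas K) / (n + 1)) := by
  have := hK.isFiniteMeasure_coneMeas
  have hslice : ∀ x, Prod.mk x ⁻¹' {p : Sph n × Set.Ioi (0 : ℝ) | p.2 < ρ p.1} =
      Set.Iio ⟨ρ x, hρ₀ x⟩ := fun x => rfl
  rw [radialRegion, ← hK.measurePreserving_smul_invGauss.measure_preimage_emb
      hK.measurableEmbedding_smul_invGauss,
    Set.preimage_image_eq _ hK.measurableEmbedding_smul_invGauss.injective,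
    Measure.prod_apply (measurableSet_lt (by fun_prop) (by fun_prop))]
  simp only [hslice, Measure.volumeIoiPow_apply_Iio]
  rw [← integral_div, ofReal_integral_eq_lintegral_ofReal]
  · exact integrable_of_continuous (by fun_prop)
  · exact ae_of_all _ fun x => by have := hρ₀ x; positivity

lemma integral_coneMeas (hK : IsSmoothConvexBody K) {F : Type*} [NormedAddCommGroup F]
    [NormedSpace ℝ F] (f : Sph n → F) :
    ∫ x, f x ∂coneMeas K = ∫ x : Sph n, dens K x • f x ∂sphMeas n := by
  rw [coneMeas, integral_withDensity_eq_integral_toReal_smul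
    hK.continuous_dens.measurable.ennreal_ofReal (ae_of_all _ fun _ => ENNReal.ofReal_lt_top)]
  simp only [ENNReal.toReal_ofReal (hK.dens_pos _).le]

end IsSmoothConvexBody

section LocalBrunnMinkowski

variable {n : ℕ} {K : Set (Eu n)}

/-- A second-order upper bound, for small `t`, for the support function at `z` of the projective
image of `K` under `w ↦ w / (1 - t⟪w, e⟫)`, the number `m` solving `h(z + t m e) = m`. The slack
`δ` absorbs the terms of higher order. -/
def projHeight (K : Set (Eu n)) (e : Eu n) (δ t : ℝ) (z : Eu n) : ℝ :=
  sfn K z * (1 + t * ⟪invGauss K z, e⟫_ℝ +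
    t ^ 2 * (⟪invGauss K z, e⟫_ℝ ^ 2 + sfn K z * (⟪hessA K z e, e⟫_ℝ / 2 + δ)))

/-- A second-order lower bound, for small `t`, for the ratio `(1 - tγ) / (1 - tb)` with
`b = ⟪∇h_K(y), e⟫`: dilating by `1 - tγ` makes the map `w ↦ w / (1 - t⟪w, e⟫)` volume preserving
to first order. -/
def projRadius (K : Set (Eu n)) (e : Eu n) (γ δ t : ℝ) (y : Eu n) : ℝ :=
  1 + t * (⟪invGauss K y, e⟫_ℝ - γ) +
    t ^ 2 * (⟪invGauss K y, e⟫_ℝ * (⟪invGauss K y, e⟫_ℝ - γ) - δ)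

end LocalBrunnMinkowski

namespace IsSmoothConvexBody

variable {n : ℕ} {K : Set (Eu n)}

lemma mem_radialRegion_of_inner_lt (hK : IsSmoothConvexBody K) {σ : Sph n → ℝ} {w : Eu n}
    (hw : w ≠ 0) (h : ∀ z : Sph n, ⟪(z : Eu n), w⟫_ℝ < σ z * sfn K z) :
    w ∈ radialRegion (fun x : Sph n => invGauss K x) σ := by
  obtain ⟨x, s, hs, rfl⟩ := hK.exists_smul_invGauss_eq hw
  refine ⟨(x, ⟨s, hs⟩), ?_, rfl⟩
  have hx := h x
  rw [real_inner_smul_right, hK.inner_invGauss_self (ne_zero_of_mem_unit_sphere x)] at hx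
  exact lt_of_mul_lt_mul_right hx (hK.pos x).le

lemma inner_lt_of_mem_radialRegion {ρ : Sph n → ℝ} {w : Eu n} {c : ℝ} {z : Eu n} (hc : 0 < c)
    (h : ∀ y, ρ y * ⟪z, invGauss K y⟫_ℝ ≤ c)
    (hw : w ∈ radialRegion (fun x : Sph n => invGauss K x) ρ) : ⟪z, w⟫_ℝ < c := by
  obtain ⟨⟨y, s, hs⟩, hsρ : s < ρ y, rfl⟩ := hw
  simp only [real_inner_smul_right]
  rcases le_or_gt ⟪z, invGauss K y⟫_ℝ 0 with hneg | hpos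
  · exact (mul_nonpos_of_nonneg_of_nonpos (le_of_lt hs) hneg).trans_lt hc
  · exact (mul_lt_mul_of_pos_right hsρ hpos).trans_le (h y)

lemma integral_pow_mul_integral_pow_le (hK : IsSmoothConvexBody K) {ρ₁ ρ₂ σ g₁ g₂ : Sph n → ℝ}
    (hρ₁ : Continuous ρ₁) (hρ₂ : Continuous ρ₂) (hσ : Continuous σ)
    (hρ₁_pos : ∀ y, 0 < ρ₁ y) (hρ₂_pos : ∀ y, 0 < ρ₂ y) (hσ_pos : ∀ y, 0 < σ y)
    (hg₁_pos : ∀ z, 0 < g₁ z) (hg₂_pos : ∀ z, 0 < g₂ z)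
    (h₁ : ∀ y z : Sph n, ρ₁ y * ⟪(z : Eu n), invGauss K y⟫_ℝ ≤ g₁ z)
    (h₂ : ∀ y z : Sph n, ρ₂ y * ⟪(z : Eu n), invGauss K y⟫_ℝ ≤ g₂ z)
    (hσ_eq : ∀ z, g₁ z + g₂ z = 2 * (σ z * sfn K z)) :
    (∫ y, ρ₁ y ^ (n + 1) ∂coneMeas K) * ∫ y, ρ₂ y ^ (n + 1) ∂coneMeas K ≤
      (∫ y, σ y ^ (n + 1) ∂coneMeas K) ^ 2 := by
  have hmid : ∀ a ∈ radialRegion (fun x : Sph n => invGauss K x) ρ₁,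
      ∀ b ∈ radialRegion (fun x : Sph n => invGauss K x) ρ₂,
      midpoint ℝ a b ∈ insert 0 (radialRegion (fun x : Sph n => invGauss K x) σ) := by
    intro a ha b hb
    refine or_iff_not_imp_left.2 fun h0 => hK.mem_radialRegion_of_inner_lt h0 fun z => ?_
    have haz := inner_lt_of_mem_radialRegion (hg₁_pos z) (h₁ · z) ha
    have hbz := inner_lt_of_mem_radialRegion (hg₂_pos z) (h₂ · z) hb
    rw [midpoint_eq_smul_add, real_inner_smul_right, inner_add_right, invOf_eq_inv]
    linarith [hσ_eq z]
  have hvol := volume_mul_volume_le_of_midpoint_mem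
    (hK.measurableSet_radialRegion hρ₁.measurable) (hK.measurableSet_radialRegion hρ₂.measurable)
    ((hK.measurableSet_radialRegion hσ.measurable).insert 0) hmid
  have hnonneg : ∀ ρ : Sph n → ℝ, (∀ y, 0 < ρ y) →
      0 ≤ (∫ y, ρ y ^ (n + 1) ∂coneMeas K) / (n + 1) := fun ρ hρ =>
    div_nonneg (integral_nonneg fun y => pow_nonneg (hρ y).le _) (by positivity)
  rw [measure_congr (insert_ae_eq_self 0 _), hK.volume_radialRegion hρ₁ hρ₁_pos,
    hK.volume_radialRegion hρ₂ hρ₂_pos, hK.volume_radialRegion hσ hσ_pos,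
    ← ENNReal.ofReal_mul (hnonneg ρ₁ hρ₁_pos),
    ← ENNReal.ofReal_pow (hnonneg σ hσ_pos), ENNReal.ofReal_le_ofReal_iff (sq_nonneg _),
    div_mul_div_comm, div_pow, ← sq] at hvol
  exact (div_le_div_iff_of_pos_right (by positivity)).1 hvol

lemma eventually_sfn_add_smul_le (hK : IsSmoothConvexBody K) (e : Eu n) {δ : ℝ} (hδ : 0 < δ) :
    ∀ᶠ r in 𝓝 (0 : ℝ), ∀ z : Sph n, sfn K (z + r • e) ≤
      sfn K z + r * ⟪invGauss K z, e⟫_ℝ + r ^ 2 * (⟪hessA K z e, e⟫_ℝ + δ) / 2 := by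
  let pt : ℝ → Sph n × Set.Icc (0 : ℝ) 1 → Eu n := fun r p => p.1 + (p.2 : ℝ) • r • e
  have hpt : Continuous (Function.uncurry pt) := by fun_prop
  have hne : ∀ᶠ r in 𝓝 (0 : ℝ), ∀ p, -‖pt r p‖ < 0 :=
    eventually_forall_lt_zero (fun p => hpt.norm.neg.continuousAt) (by simp [pt])
  have hhess : ∀ᶠ r in 𝓝 (0 : ℝ), ∀ p,
      ⟪hessA K (pt r p) e, e⟫_ℝ - (⟪hessA K p.1 e, e⟫_ℝ + δ) < 0 := by
    refine eventually_forall_lt_zero (fun p => ?_) (by simp [pt, hδ])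
    have hA : ContinuousAt (fun q : ℝ × Sph n × Set.Icc (0 : ℝ) 1 => hessA K (pt q.1 q.2)) (0, p) :=
      ContinuousAt.comp (f := Function.uncurry pt)
        (hK.continuousAt_hessA (by simp [pt, ne_zero_of_mem_unit_sphere])) hpt.continuousAt
    have hA' : ContinuousAt (fun q : ℝ × Sph n × Set.Icc (0 : ℝ) 1 => hessA K q.2.1) (0, p) :=
      (hK.continuous_hessA.comp (continuous_fst.comp continuous_snd)).continuousAt
    simp only [Function.uncurry_def]
    fun_prop
  filter_upwards [hne, hhess] with r hne hhess z
  have hne : ∀ s ∈ Set.Icc (0 : ℝ) 1, (z : Eu n) + s • r • e ≠ 0 := fun s hs =>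
    norm_pos_iff.1 (neg_lt_zero.1 (hne (z, ⟨s, hs⟩)))
  have htaylor := le_add_deriv_add_half_of_deriv2_le (M := r ^ 2 * (⟪hessA K z e, e⟫_ℝ + δ))
    (φ := fun s => sfn K (z + s • r • e)) (φ' := fun s => ⟪invGauss K (z + s • r • e), r • e⟫_ℝ)
    (φ'' := fun s => ⟪hessA K (z + s • r • e) (r • e), r • e⟫_ℝ)
    (fun s hs => hasDerivAt_comp_line (hK.hasFDerivAt_sfn (hne s hs)))
    (fun s hs => by
      simpa using (hasDerivAt_comp_line (hK.hasFDerivAt_invGauss (hne s hs))).inner ℝ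
        (hasDerivAt_const s (r • e)))
    (fun s hs => by
      have := (sub_neg.1 (hhess (z, ⟨s, hs⟩))).le
      rw [map_smul, real_inner_smul_left, real_inner_smul_right, ← mul_assoc, ← sq]
      exact mul_le_mul_of_nonneg_left this (sq_nonneg r))
  simpa [real_inner_smul_right] using htaylor

lemma continuous_inner_invGauss (hK : IsSmoothConvexBody K) (e : Eu n) :
    Continuous fun y : Sph n => ⟪invGauss K y, e⟫_ℝ :=
  hK.continuous_invGauss.inner continuous_const

lemma continuous_inner_hessA (hK : IsSmoothConvexBody K) (e : Eu n) :
    Continuous fun y : Sph n => ⟪hessA K y e, e⟫_ℝ :=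
  (hK.continuous_hessA.clm_apply continuous_const).inner continuous_const

lemma continuous_projHeight (hK : IsSmoothConvexBody K) (e : Eu n) (δ : ℝ) :
    Continuous fun p : ℝ × Sph n => projHeight K e δ p.1 p.2 := by
  have hh : Continuous fun p : ℝ × Sph n => sfn K p.2 := hK.continuous_sfn.comp continuous_snd
  have hb : Continuous fun p : ℝ × Sph n => ⟪invGauss K p.2, e⟫_ℝ :=
    (hK.continuous_inner_invGauss e).comp continuous_snd
  have hq : Continuous fun p : ℝ × Sph n => ⟪hessA K p.2 e, e⟫_ℝ :=
    (hK.continuous_inner_hessA e).comp continuous_snd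
  unfold projHeight
  fun_prop

lemma continuous_projRadius (hK : IsSmoothConvexBody K) (e : Eu n) (γ δ : ℝ) :
    Continuous fun p : ℝ × Sph n => projRadius K e γ δ p.1 p.2 := by
  have hb : Continuous fun p : ℝ × Sph n => ⟪invGauss K p.2, e⟫_ℝ :=
    (hK.continuous_inner_invGauss e).comp continuous_snd
  unfold projRadius
  fun_prop

lemma eventually_projHeight_pos (hK : IsSmoothConvexBody K) (e : Eu n) (δ : ℝ) :
    ∀ᶠ t in 𝓝 (0 : ℝ), ∀ z : Sph n, 0 < projHeight K e δ t z := by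
  have h := eventually_forall_lt_zero (t₀ := 0) (F := fun t (z : Sph n) => -projHeight K e δ t z)
    (fun z => (hK.continuous_projHeight e δ).neg.continuousAt (x := (0, z)))
    (fun z => by simpa [projHeight] using hK.pos z)
  exact h.mono fun t ht z => neg_lt_zero.1 (ht z)

lemma eventually_projRadius_pos (hK : IsSmoothConvexBody K) (e : Eu n) (γ δ : ℝ) :
    ∀ᶠ t in 𝓝 (0 : ℝ), ∀ y : Sph n, 0 < projRadius K e γ δ t y := by
  have h := eventually_forall_lt_zero (t₀ := 0) (F := fun t (y : Sph n) => -projRadius K e γ δ t y)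
    (fun y => (hK.continuous_projRadius e γ δ).neg.continuousAt (x := (0, y)))
    (fun y => by simp [projRadius])
  exact h.mono fun t ht y => neg_lt_zero.1 (ht y)

lemma eventually_sfn_add_projHeight_smul_le (hK : IsSmoothConvexBody K) (e : Eu n) {δ : ℝ}
    (hδ : 0 < δ) : ∀ᶠ t in 𝓝 (0 : ℝ), ∀ z : Sph n,
      sfn K (z + (t * projHeight K e δ t z) • e) ≤ projHeight K e δ t z := by
  have hh : Continuous fun p : ℝ × Sph n => sfn K p.2 := hK.continuous_sfn.comp continuous_snd
  have hb : Continuous fun p : ℝ × Sph n => ⟪invGauss K p.2, e⟫_ℝ :=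
    (hK.continuous_inner_invGauss e).comp continuous_snd
  have hq : Continuous fun p : ℝ × Sph n => ⟪hessA K p.2 e, e⟫_ℝ :=
    (hK.continuous_inner_hessA e).comp continuous_snd
  have hm := hK.continuous_projHeight e δ
  obtain ⟨η, hη, htaylor⟩ := Metric.eventually_nhds_iff.1 (hK.eventually_sfn_add_smul_le e hδ)
  have hsmall := eventually_forall_lt_zero (t₀ := 0)
    (F := fun t (z : Sph n) => |t * projHeight K e δ t z| - η)
    (fun z => Continuous.continuousAt (by simp only [Function.uncurry_def]; fun_prop))
    (fun z => by simpa using hη)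
  have hsecond := eventually_forall_lt_zero (t₀ := 0)
    (F := fun t (z : Sph n) => projHeight K e δ t z ^ 2 * (⟪hessA K z e, e⟫_ℝ + δ) / 2 +
      t * sfn K z * ⟪invGauss K z, e⟫_ℝ *
        (⟪invGauss K z, e⟫_ℝ ^ 2 + sfn K z * (⟪hessA K z e, e⟫_ℝ / 2 + δ)) -
      sfn K z ^ 2 * (⟪hessA K z e, e⟫_ℝ / 2 + δ))
    (fun z => Continuous.continuousAt (by simp only [Function.uncurry_def]; fun_prop))
    (fun z => by
      have := mul_pos (pow_pos (hK.pos z) 2) hδ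
      simp only [projHeight]
      linarith)
  filter_upwards [hsmall, hsecond] with t hsmall hsecond z
  refine (htaylor (by simpa using hsmall z) z).trans ?_
  have hle := mul_nonpos_of_nonneg_of_nonpos (sq_nonneg t) (hsecond z).le
  simp only [projHeight] at hle ⊢
  linear_combination hle

lemma eventually_projRadius_mul_le (hK : IsSmoothConvexBody K) (e : Eu n) (γ : ℝ) {δ : ℝ}
    (hδ : 0 < δ) : ∀ᶠ t in 𝓝 (0 : ℝ), ∀ y : Sph n,
      projRadius K e γ δ t y * (1 - t * ⟪invGauss K y, e⟫_ℝ) ≤ 1 - t * γ := by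
  have hb : Continuous fun p : ℝ × Sph n => ⟪invGauss K p.2, e⟫_ℝ :=
    (hK.continuous_inner_invGauss e).comp continuous_snd
  have hthird := eventually_forall_lt_zero (t₀ := 0)
    (F := fun t (y : Sph n) => -(δ + t * ⟪invGauss K y, e⟫_ℝ *
      (⟪invGauss K y, e⟫_ℝ * (⟪invGauss K y, e⟫_ℝ - γ) - δ)))
    (fun y => Continuous.continuousAt (by simp only [Function.uncurry_def]; fun_prop))
    (fun y => by simpa using hδ)
  filter_upwards [hthird] with t hthird y
  have hle := mul_nonpos_of_nonneg_of_nonpos (sq_nonneg t) (hthird y).le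
  simp only [projRadius]
  linear_combination hle

lemma eventually_projRadius_mul_inner_le (hK : IsSmoothConvexBody K) (e : Eu n) (γ : ℝ) {δ : ℝ}
    (hδ : 0 < δ) : ∀ᶠ t in 𝓝 (0 : ℝ), ∀ y z : Sph n,
      projRadius K e γ δ t y * ⟪(z : Eu n), invGauss K y⟫_ℝ ≤
        projHeight K e δ t z * (1 - t * γ) := by
  filter_upwards [hK.eventually_sfn_add_projHeight_smul_le e hδ, hK.eventually_projHeight_pos e δ,
    hK.eventually_projRadius_pos e γ δ, hK.eventually_projRadius_mul_le e γ hδ]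
    with t hheight hm_pos hρ_pos hρ_le y z
  have hmem := (hK.inner_invGauss_le (ne_zero_of_mem_unit_sphere y) _).trans (hheight z)
  rw [inner_add_left, real_inner_smul_left, real_inner_comm _ e] at hmem
  calc projRadius K e γ δ t y * ⟪(z : Eu n), invGauss K y⟫_ℝ
      ≤ projRadius K e γ δ t y * (projHeight K e δ t z * (1 - t * ⟪invGauss K y, e⟫_ℝ)) :=
        mul_le_mul_of_nonneg_left (by linarith) (hρ_pos y).le
    _ = projHeight K e δ t z * (projRadius K e γ δ t y * (1 - t * ⟪invGauss K y, e⟫_ℝ)) := by ring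
    _ ≤ projHeight K e δ t z * (1 - t * γ) :=
        mul_le_mul_of_nonneg_left (hρ_le y) (hm_pos z).le

lemma eventually_integral_projRadius_pow_mul_le (hK : IsSmoothConvexBody K) (e : Eu n) (γ : ℝ)
    {δ : ℝ} (hδ : 0 < δ) {σ : ℝ → Sph n → ℝ}
    (hσ : ∀ t z, σ t z = 1 + t ^ 2 * (⟪invGauss K z, e⟫_ℝ * (⟪invGauss K z, e⟫_ℝ - γ) +
      sfn K z * (⟪hessA K z e, e⟫_ℝ / 2 + δ))) :
    ∀ᶠ t in 𝓝 (0 : ℝ), (∫ y : Sph n, projRadius K e γ δ t y ^ (n + 1) ∂coneMeas K) *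
      (∫ y : Sph n, projRadius K e γ δ (-t) y ^ (n + 1) ∂coneMeas K) ≤
      (∫ y, σ t y ^ (n + 1) ∂coneMeas K) ^ 2 := by
  have hneg : Filter.Tendsto (fun t : ℝ => -t) (𝓝 0) (𝓝 0) := continuous_neg.tendsto' 0 0 neg_zero
  have hh : Continuous fun p : ℝ × Sph n => sfn K p.2 := hK.continuous_sfn.comp continuous_snd
  have hb : Continuous fun p : ℝ × Sph n => ⟪invGauss K p.2, e⟫_ℝ :=
    (hK.continuous_inner_invGauss e).comp continuous_snd
  have hq : Continuous fun p : ℝ × Sph n => ⟪hessA K p.2 e, e⟫_ℝ :=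
    (hK.continuous_inner_hessA e).comp continuous_snd
  have hσ_cont : Continuous (Function.uncurry σ) := by
    simp only [Function.uncurry_def, hσ]
    fun_prop
  have hσ_pos := eventually_forall_lt_zero (t₀ := 0) (F := fun t z => -σ t z)
    (fun z => hσ_cont.neg.continuousAt) (fun z => by simp [hσ])
  have hγ_pos : ∀ᶠ t in 𝓝 (0 : ℝ), 0 < 1 - t * γ :=
    (Continuous.tendsto' (by fun_prop) 0 1 (by simp)).eventually_const_lt one_pos
  have hm_pos := hK.eventually_projHeight_pos e δ
  have hρ_pos := hK.eventually_projRadius_pos e γ δ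
  have hρm := hK.eventually_projRadius_mul_inner_le e γ hδ
  have hρ_cont : ∀ t : ℝ, Continuous fun y : Sph n => projRadius K e γ δ t y := fun t =>
    (hK.continuous_projRadius e γ δ).comp (by fun_prop : Continuous fun y : Sph n => (t, y))
  filter_upwards [hσ_pos, hγ_pos, hneg.eventually hγ_pos, hm_pos, hneg.eventually hm_pos, hρ_pos,
    hneg.eventually hρ_pos, hρm, hneg.eventually hρm] with t hσ_pos hγ hγ' hm hm' hρ hρ' hρm hρm'
  refine hK.integral_pow_mul_integral_pow_le (hρ_cont t) (hρ_cont (-t))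
    (hσ_cont.comp (by fun_prop : Continuous fun y : Sph n => (t, y))) hρ hρ'
    (fun z => neg_lt_zero.1 (hσ_pos z)) (fun z => mul_pos (hm z) hγ)
    (fun z => mul_pos (hm' z) hγ') hρm hρm' fun z => ?_
  simp only [projHeight, hσ]
  ring

lemma mul_integral_sq_le_add (hK : IsSmoothConvexBody K) (e : Eu n) {γ δ : ℝ}
    (hγ : ∫ y : Sph n, (⟪invGauss K y, e⟫_ℝ - γ) ∂coneMeas K = 0) (hδ : 0 < δ) :
    n * ∫ y : Sph n, (⟪invGauss K y, e⟫_ℝ - γ) ^ 2 ∂coneMeas K ≤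
      (∫ y : Sph n, sfn K y * ⟪hessA K y e, e⟫_ℝ ∂coneMeas K) +
        δ * (2 * ∫ y : Sph n, (sfn K y + 1) ∂coneMeas K) := by
  have := hK.isFiniteMeasure_coneMeas
  have := hK.neZero_coneMeas
  have hh := hK.continuous_sfn
  have hb := hK.continuous_inner_invGauss e
  have hq := hK.continuous_inner_hessA e
  have hsecond := le_of_integral_pow_mul_integral_pow_le (μ := coneMeas K)
    (u := fun y => ⟪invGauss K y, e⟫_ℝ - γ)
    (v := fun y => ⟪invGauss K y, e⟫_ℝ * (⟪invGauss K y, e⟫_ℝ - γ) - δ)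
    (w := fun z => ⟪invGauss K z, e⟫_ℝ * (⟪invGauss K z, e⟫_ℝ - γ) +
      sfn K z * (⟪hessA K z e, e⟫_ℝ / 2 + δ))
    (by fun_prop) (by fun_prop) (by fun_prop) hγ (n + 1) (nhdsWithin_le_nhds <| by
      filter_upwards [hK.eventually_integral_projRadius_pow_mul_le e γ hδ fun _ _ => rfl]
        with t ht
      simpa only [projRadius, neg_sq, neg_mul, ← sub_eq_add_neg] using ht)
  have hw : ∫ z : Sph n, (⟪invGauss K z, e⟫_ℝ * (⟪invGauss K z, e⟫_ℝ - γ) +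
        sfn K z * (⟪hessA K z e, e⟫_ℝ / 2 + δ)) ∂coneMeas K =
      (∫ y : Sph n, (⟪invGauss K y, e⟫_ℝ * (⟪invGauss K y, e⟫_ℝ - γ) - δ) ∂coneMeas K) +
      (∫ y : Sph n, sfn K y * ⟪hessA K y e, e⟫_ℝ ∂coneMeas K) / 2 +
      δ * ∫ y : Sph n, (sfn K y + 1) ∂coneMeas K := by
    rw [← integral_div, ← integral_const_mul,
      ← integral_add (integrable_of_continuous (by fun_prop))
        (integrable_of_continuous (by fun_prop)),
      ← integral_add (integrable_of_continuous (by fun_prop))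
        (integrable_of_continuous (by fun_prop))]
    congr with z
    ring
  rw [hw] at hsecond
  push_cast at hsecond
  exact le_of_mul_le_mul_left (by linear_combination 2 * hsecond) (by positivity : 0 < (n + 1 : ℝ))

lemma mul_integral_sq_le (hK : IsSmoothConvexBody K) (e : Eu n) {γ : ℝ}
    (hγ : ∫ y : Sph n, (⟪invGauss K y, e⟫_ℝ - γ) ∂coneMeas K = 0) :
    n * ∫ y : Sph n, (⟪invGauss K y, e⟫_ℝ - γ) ^ 2 ∂coneMeas K ≤
      ∫ y : Sph n, sfn K y * ⟪hessA K y e, e⟫_ℝ ∂coneMeas K := by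
  have hlim : Filter.Tendsto (fun δ : ℝ =>
      (∫ y : Sph n, sfn K y * ⟪hessA K y e, e⟫_ℝ ∂coneMeas K) +
        δ * (2 * ∫ y : Sph n, (sfn K y + 1) ∂coneMeas K)) (𝓝[>] 0)
      (𝓝 (∫ y : Sph n, sfn K y * ⟪hessA K y e, e⟫_ℝ ∂coneMeas K)) :=
    (Continuous.tendsto' (by fun_prop) 0 _ (by simp)).mono_left nhdsWithin_le_nhds
  exact ge_of_tendsto hlim
    (eventually_mem_nhdsWithin.mono fun δ hδ => hK.mul_integral_sq_le_add e hγ hδ)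

lemma cK_eq_average (hK : IsSmoothConvexBody K) : cK K = ⨍ y : Sph n, invGauss K y ∂coneMeas K := by
  have hmass : (coneMeas K).real Set.univ = ∫ x : Sph n, dens K x ∂sphMeas n := by
    simpa using hK.integral_coneMeas fun _ => (1 : ℝ)
  rw [average_eq, hmass, hK.integral_coneMeas, cK]
  rfl

lemma mul_integral_norm_sub_cK_sq_le (hK : IsSmoothConvexBody K) :
    n * ∫ y : Sph n, ‖invGauss K y - cK K‖ ^ 2 ∂coneMeas K ≤
      ∫ y : Sph n, sfn K y * LinearMap.trace ℝ (Eu n) (hessA K y) ∂coneMeas K := by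
  have := hK.isFiniteMeasure_coneMeas
  have hh := hK.continuous_sfn
  have hX := hK.continuous_invGauss
  have hA := hK.continuous_hessA
  let b := EuclideanSpace.basisFun (Fin (n + 1)) ℝ
  have hmean : ∀ i, ∫ y : Sph n, (⟪invGauss K y, b i⟫_ℝ - ⟪cK K, b i⟫_ℝ) ∂coneMeas K = 0 := by
    intro i
    have hzero := integral_sub_average (coneMeas K) fun y : Sph n => invGauss K y
    simp_rw [← inner_sub_left, real_inner_comm (b i)]
    rw [integral_inner (integrable_of_continuous (by fun_prop)), hK.cK_eq_average, hzero,
      inner_zero_right]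
  calc n * ∫ y : Sph n, ‖invGauss K y - cK K‖ ^ 2 ∂coneMeas K
      = ∑ i, n * ∫ y : Sph n, (⟪invGauss K y, b i⟫_ℝ - ⟪cK K, b i⟫_ℝ) ^ 2 ∂coneMeas K := by
        rw [← Finset.mul_sum, ← integral_finsetSum _ fun i _ => integrable_of_continuous
          (by fun_prop)]
        simp only [← inner_sub_left, b.sum_sq_inner_left]
    _ ≤ ∑ i, ∫ y : Sph n, sfn K y * ⟪hessA K y (b i), b i⟫_ℝ ∂coneMeas K :=
        Finset.sum_le_sum fun i _ => hK.mul_integral_sq_le (b i) (hmean i)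
    _ = ∫ y : Sph n, sfn K y * LinearMap.trace ℝ (Eu n) (hessA K y) ∂coneMeas K := by
        rw [← integral_finsetSum _ fun i _ => integrable_of_continuous (by fun_prop)]
        simp only [LinearMap.trace_eq_sum_inner _ b, Finset.mul_sum, real_inner_comm,
          ContinuousLinearMap.coe_coe]

end IsSmoothConvexBody

section SphericalDivergence

variable {E : Type*} [NormedAddCommGroup E]

lemma fderiv_smul_of_homogeneous [NormedSpace ℝ E] {F : Type*} [NormedAddCommGroup F]
    [NormedSpace ℝ F] {W : E → F} (hW : ∀ r > (0 : ℝ), ∀ z, W (r • z) = r • W z) {r : ℝ}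
    (hr : 0 < r) (z : E) :
    fderiv ℝ W (r • z) = fderiv ℝ W z := by
  have := invertibleOfNonzero hr.ne'
  have h := fderiv_comp_smul (𝕜 := ℝ) (f := W) (x := z) r
  simp_rw [hW r hr] at h
  exact smul_right_injective _ hr.ne' (h.symm.trans (fderiv_const_smul_of_invertible r))

variable [InnerProductSpace ℝ E]

lemma contDiff_comp_normSq_smul {F : Type*} [NormedAddCommGroup F] [NormedSpace ℝ F]
    {k : WithTop ℕ∞} {g : ℝ → ℝ} {f : E → F} (hg : ContDiff ℝ k g) (hg₀ : (0 : ℝ) ∉ tsupport g)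
    (hf : ∀ z ≠ 0, ContDiffAt ℝ k f z) : ContDiff ℝ k fun z => g (‖z‖ ^ 2) • f z := by
  rw [contDiff_iff_contDiffAt]
  intro z
  obtain rfl | hz := eq_or_ne z 0
  · have hlim : Filter.Tendsto (fun z : E => ‖z‖ ^ 2) (𝓝 0) (𝓝 0) := by
      simpa using (by fun_prop : Continuous fun z : E => ‖z‖ ^ 2).tendsto 0
    have hvanish : ∀ᶠ z : E in 𝓝 0, g (‖z‖ ^ 2) = 0 :=
      hlim.eventually (notMem_tsupport_iff_eventuallyEq.1 hg₀)
    exact (contDiffAt_const (c := (0 : F))).congr_of_eventuallyEq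
      (hvanish.mono fun z hz => by simp only [hz, zero_smul])
  · exact (hg.comp (contDiff_norm_sq ℝ)).contDiffAt.smul (hf z hz)

variable [FiniteDimensional ℝ E]

lemma hasCompactSupport_comp_normSq {g : ℝ → ℝ} (hg : HasCompactSupport g) :
    HasCompactSupport fun z : E => g (‖z‖ ^ 2) := by
  rw [hasCompactSupport_iff_eventuallyEq, Filter.coclosedCompact_eq_cocompact] at hg ⊢
  exact (((Filter.tendsto_pow_atTop two_ne_zero).comp
    tendsto_norm_cocompact_atTop).mono_right atTop_le_cocompact).eventually hg

lemma contDiff_trace {k : WithTop ℕ∞} :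
    ContDiff ℝ k fun T : E →L[ℝ] E => LinearMap.trace ℝ E T :=
  (LinearMap.trace ℝ E ∘ₗ ContinuousLinearMap.coeLM ℝ).toContinuousLinearMap.contDiff

lemma trace_toLinearMap_smulRight (f : E →L[ℝ] ℝ) (x : E) :
    LinearMap.trace ℝ E (f.smulRight x : E →L[ℝ] E) = f x :=
  LinearMap.trace_smulRight _ _

lemma trace_fderiv_comp_normSq_smul {g : ℝ → ℝ} {W : E → E} {z : E}
    (hg : DifferentiableAt ℝ g (‖z‖ ^ 2)) (hW : DifferentiableAt ℝ W z) :
    LinearMap.trace ℝ E (fderiv ℝ (fun z => g (‖z‖ ^ 2) • W z) z) =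
      g (‖z‖ ^ 2) * LinearMap.trace ℝ E (fderiv ℝ W z) +
        2 * deriv g (‖z‖ ^ 2) * ⟪z, W z⟫_ℝ := by
  have hrad : HasFDerivAt (fun z : E => g (‖z‖ ^ 2))
      (deriv g (‖z‖ ^ 2) • (2 : ℝ) • innerSL ℝ z) z :=
    mod_cast hg.hasDerivAt.comp_hasFDerivAt z (hasStrictFDerivAt_norm_sq z).hasFDerivAt
  have hV : HasFDerivAt (fun z => g (‖z‖ ^ 2) • W z) _ z := hrad.smul hW.hasFDerivAt
  rw [hV.fderiv, ContinuousLinearMap.toLinearMap_add, map_add, ContinuousLinearMap.toLinearMap_smul,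
    map_smul, trace_toLinearMap_smulRight]
  simp only [smul_apply, innerSL_apply_apply, smul_eq_mul]
  ring

variable [MeasurableSpace E] [BorelSpace E] (μ : Measure E) [μ.IsAddHaarMeasure]

lemma integral_fderiv_apply_eq_zero {V : E → E} (hV : ContDiff ℝ 1 V) (hV' : HasCompactSupport V)
    (v : E) : ∫ z, fderiv ℝ V z v ∂μ = 0 := by
  have : Continuous (fderiv ℝ V) := hV.continuous_fderiv one_ne_zero
  have hDv : Integrable (fun z => fderiv ℝ V z v) μ :=
    Continuous.integrable_of_hasCompactSupport (by fun_prop) (hV'.fderiv_apply ℝ v)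
  simpa using integral_smul_fderiv_eq_neg_fderiv_smul_of_integrable (μ := μ) (v := v)
    (f := fun _ => (1 : ℝ)) (g := V) (by simp) (by simpa using hDv)
    (by simpa using hV.continuous.integrable_of_hasCompactSupport hV')
    (fun _ _ => differentiableAt_const _) (fun z _ => hV.differentiable one_ne_zero z)

lemma integral_trace_fderiv_eq_zero {V : E → E} (hV : ContDiff ℝ 1 V) (hV' : HasCompactSupport V) :
    ∫ z, LinearMap.trace ℝ E (fderiv ℝ V z) ∂μ = 0 := by
  let b := stdOrthonormalBasis ℝ E
  have : Continuous (fderiv ℝ V) := hV.continuous_fderiv one_ne_zero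
  have hint : ∀ v, Integrable (fun z => fderiv ℝ V z v) μ := fun v =>
    Continuous.integrable_of_hasCompactSupport (by fun_prop) (hV'.fderiv_apply ℝ v)
  simp_rw [LinearMap.trace_eq_sum_inner _ b, ContinuousLinearMap.coe_coe]
  rw [integral_finsetSum _ fun i _ => (hint (b i)).const_inner (b i)]
  refine Finset.sum_eq_zero fun i _ => ?_
  rw [integral_inner (hint (b i)), integral_fderiv_apply_eq_zero μ hV hV', inner_zero_right]

lemma integrable_comp_normSq_mul {g : ℝ → ℝ} {f : E → ℝ} (hg : Continuous g)
    (hg_supp : HasCompactSupport g) (hg₀ : (0 : ℝ) ∉ tsupport g)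
    (hf : ∀ z ≠ 0, ContDiffAt ℝ 0 f z) : Integrable (fun z => g (‖z‖ ^ 2) * f z) μ :=
  (contDiff_comp_normSq_smul (contDiff_zero.2 hg) hg₀ hf).continuous
    |>.integrable_of_hasCompactSupport (hasCompactSupport_comp_normSq hg_supp).mul_right

variable [Nontrivial E]

lemma integral_comp_normSq_mul (g : ℝ → ℝ) {f : E → ℝ} {k : ℕ}
    (hf : ∀ r > 0, ∀ z, f (r • z) = r ^ k * f z) :
    ∫ z, g (‖z‖ ^ 2) * f z ∂μ = (∫ y : sphere (0 : E) 1, f y ∂μ.toSphere) *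
      ∫ r : Set.Ioi (0 : ℝ), g ((r : ℝ) ^ 2) * (r : ℝ) ^ k
        ∂Measure.volumeIoiPow (Module.finrank ℝ E - 1) := by
  rw [← (measurePreserving_smul_sphere μ).integral_comp measurableEmbedding_smul_sphere,
    ← integral_prod_mul]
  congr with p
  rw [norm_smul, norm_eq_of_mem_sphere, mul_one, Real.norm_of_nonneg (le_of_lt p.2.2),
    hf _ p.2.2]
  ring

lemma integral_sphere_trace_fderiv_mul_add_eq_zero {g : ℝ → ℝ} (hg : ContDiff ℝ 1 g)
    (hg_supp : HasCompactSupport g) (hg₀ : (0 : ℝ) ∉ tsupport g) {W : E → E}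
    (hW : ∀ z ≠ 0, ContDiffAt ℝ 1 W z) (hW_smul : ∀ r > (0 : ℝ), ∀ z, W (r • z) = r • W z) :
    (∫ y : sphere (0 : E) 1, LinearMap.trace ℝ E (fderiv ℝ W y) ∂μ.toSphere) *
        (∫ r : Set.Ioi (0 : ℝ), g ((r : ℝ) ^ 2) * (r : ℝ) ^ 0
          ∂Measure.volumeIoiPow (Module.finrank ℝ E - 1)) +
      (∫ y : sphere (0 : E) 1, ⟪(y : E), W y⟫_ℝ ∂μ.toSphere) *
        (∫ r : Set.Ioi (0 : ℝ), 2 * deriv g ((r : ℝ) ^ 2) * (r : ℝ) ^ 2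
          ∂Measure.volumeIoiPow (Module.finrank ℝ E - 1)) = 0 := by
  have hV : ContDiff ℝ 1 fun z => g (‖z‖ ^ 2) • W z := contDiff_comp_normSq_smul hg hg₀ hW
  have hV_supp : HasCompactSupport fun z => g (‖z‖ ^ 2) • W z :=
    (hasCompactSupport_comp_normSq hg_supp).smul_right
  have hdiv : Integrable (fun z => g (‖z‖ ^ 2) * LinearMap.trace ℝ E (fderiv ℝ W z)) μ :=
    integrable_comp_normSq_mul μ hg.continuous hg_supp hg₀ fun z hz =>
      contDiff_trace.contDiffAt.comp z ((hW z hz).fderiv_right le_rfl)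
  have hrad : Integrable (fun z => 2 * deriv g (‖z‖ ^ 2) * ⟪z, W z⟫_ℝ) μ :=
    integrable_comp_normSq_mul μ (g := fun t => 2 * deriv g t)
      (continuous_const.mul (hg.continuous_deriv le_rfl)) hg_supp.deriv.mul_left
      (fun h => hg₀ (tsupport_deriv_subset (tsupport_mul_subset_right h)))
      fun z hz => contDiffAt_id.inner ℝ ((hW z hz).of_le zero_le_one)
  rw [← integral_comp_normSq_mul μ g (f := fun z => LinearMap.trace ℝ E (fderiv ℝ W z))
      fun r hr z => by rw [fderiv_smul_of_homogeneous hW_smul hr, pow_zero, one_mul],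
    ← integral_comp_normSq_mul μ (fun t => 2 * deriv g t) (f := fun z => ⟪z, W z⟫_ℝ)
      fun r hr z => by rw [hW_smul r hr, real_inner_smul_left, real_inner_smul_right]; ring,
    ← integral_add hdiv hrad, ← integral_trace_fderiv_eq_zero μ hV hV_supp]
  refine integral_congr_ae ?_
  filter_upwards [Measure.ae_ne μ 0] with z hz
  exact (trace_fderiv_comp_normSq_smul (hg.differentiable one_ne_zero _)
    ((hW z hz).differentiableAt one_ne_zero)).symm

theorem integral_sphere_trace_fderiv {W : E → E} (hW : ∀ z ≠ 0, ContDiffAt ℝ 1 W z)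
    (hW_smul : ∀ r > (0 : ℝ), ∀ z, W (r • z) = r • W z) :
    ∫ y : sphere (0 : E) 1, LinearMap.trace ℝ E (fderiv ℝ W y) ∂μ.toSphere =
      Module.finrank ℝ E * ∫ y : sphere (0 : E) 1, ⟪(y : E), W y⟫_ℝ ∂μ.toSphere := by
  let g : ContDiffBump (2 : ℝ) := ⟨1 / 2, 1, by norm_num, by norm_num⟩
  have hg₀ : (0 : ℝ) ∉ tsupport g := by
    rw [g.tsupport_eq]
    norm_num [mem_closedBall, Real.dist_eq, g]
  have hmass : 0 < ∫ z : E, g (‖z‖ ^ 2) * 1 ∂μ := by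
    obtain ⟨v, hv⟩ := exists_norm_eq E (Real.sqrt_nonneg 2)
    simp_rw [mul_one]
    refine (g.continuous.comp (by fun_prop) : Continuous fun z : E => g (‖z‖ ^ 2))
      |>.integral_pos_of_hasCompactSupport_nonneg_nonzero
        (hasCompactSupport_comp_normSq g.hasCompactSupport) (fun z => g.nonneg) (x := v) ?_
    rw [hv, Real.sq_sqrt zero_le_two]
    exact (g.pos_of_mem_ball (mem_ball_self g.rOut_pos)).ne'
  rw [integral_comp_normSq_mul μ g (f := fun _ => 1) (k := 0) (by simp)] at hmass
  have hid := integral_sphere_trace_fderiv_mul_add_eq_zero μ g.contDiff g.hasCompactSupport hg₀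
    (W := fun z => z) (fun _ _ => contDiffAt_id) fun _ _ _ => rfl
  have hW := integral_sphere_trace_fderiv_mul_add_eq_zero μ g.contDiff g.hasCompactSupport hg₀
    hW hW_smul
  simp only [fderiv_fun_id, ContinuousLinearMap.coe_id, LinearMap.trace_id,
    real_inner_self_eq_norm_sq, norm_eq_of_mem_sphere, one_pow, integral_const, smul_eq_mul,
    mul_one] at hid hmass
  have hσ := left_ne_zero_of_mul hmass.ne'
  refine mul_right_cancel₀ (right_ne_zero_of_mul hmass.ne') (mul_left_cancel₀ hσ ?_)
  linear_combination μ.toSphere.real Set.univ * hW -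
    (∫ y : sphere (0 : E) 1, ⟪(y : E), W y⟫_ℝ ∂μ.toSphere) * hid

end SphericalDivergence

/-- The component of `∇h_K(y) - c(K)` tangent to the sphere at `y`, which is the spherical gradient
of the support function of `K - c(K)`; it vanishes identically for a ball. -/
def tangPart {n : ℕ} (K : Set (Eu n)) (y : Eu n) : Eu n := invGauss K y - cK K - tsfn K y • y

namespace IsSmoothConvexBody

variable {n : ℕ} {K : Set (Eu n)}

lemma continuous_trace_hessA (hK : IsSmoothConvexBody K) :
    Continuous fun y : Sph n => LinearMap.trace ℝ (Eu n) (hessA K y) :=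
  (contDiff_trace (k := 0)).continuous.comp hK.continuous_hessA

lemma trace_hessA_nonneg (hK : IsSmoothConvexBody K) (y : Sph n) :
    0 ≤ LinearMap.trace ℝ (Eu n) (hessA K y) := by
  rw [LinearMap.trace_eq_sum_inner _ (EuclideanSpace.basisFun (Fin (n + 1)) ℝ)]
  refine Finset.sum_nonneg fun i _ => ?_
  rw [real_inner_comm]
  exact hK.inner_hessA_nonneg y _

lemma trace_fderiv_sfn_smul_sub (hK : IsSmoothConvexBody K) (c : Eu n) {z : Eu n} (hz : z ≠ 0) :
    LinearMap.trace ℝ (Eu n)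
        (fderiv ℝ (fun z => sfn K z • (invGauss K z - c) - (sfn K z - ⟪c, z⟫_ℝ) • c) z) =
      sfn K z * LinearMap.trace ℝ (Eu n) (hessA K z) + ‖invGauss K z - c‖ ^ 2 := by
  have hh := hK.hasFDerivAt_sfn hz
  have hW : HasFDerivAt (fun z => sfn K z • (invGauss K z - c) - (sfn K z - ⟪c, z⟫_ℝ) • c) _ z :=
    (hh.smul ((hK.hasFDerivAt_invGauss hz).sub_const c)).sub
      ((hh.sub (innerSL ℝ c).hasFDerivAt).smul_const c)
  rw [hW.fderiv, ContinuousLinearMap.toLinearMap_sub, map_sub, ContinuousLinearMap.toLinearMap_add,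
    map_add, ContinuousLinearMap.toLinearMap_smul, map_smul, trace_toLinearMap_smulRight,
    trace_toLinearMap_smulRight, ← real_inner_self_eq_norm_sq]
  simp only [sub_apply, innerSL_apply_apply, smul_eq_mul, inner_sub_left, inner_sub_right,
    real_inner_comm c]
  ring

lemma integral_sfn_mul_trace_hessA_add (hK : IsSmoothConvexBody K) (c : Eu n) :
    ∫ y : Sph n, sfn K y * LinearMap.trace ℝ (Eu n) (hessA K y) ∂sphMeas n +
        ∫ y : Sph n, ‖invGauss K y - c‖ ^ 2 ∂sphMeas n =
      (n + 1) * ∫ y : Sph n, (sfn K y - ⟪(y : Eu n), c⟫_ℝ) ^ 2 ∂sphMeas n := by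
  have hh := hK.continuous_sfn
  have hX := hK.continuous_invGauss
  have htrace := hK.continuous_trace_hessA
  have hW_smooth : ∀ z ≠ 0, ContDiffAt ℝ 1
      (fun z => sfn K z • (invGauss K z - c) - (sfn K z - ⟪c, z⟫_ℝ) • c) z := by
    intro z hz
    have hsfn := (hK.contDiffAt_sfn hz).of_le (m := 1) (by simp)
    have hinv := (hK.contDiffAt_invGauss hz).of_le (m := 1) (by simp)
    exact (hsfn.smul (hinv.sub contDiffAt_const)).sub
      ((hsfn.sub (contDiffAt_const.inner ℝ contDiffAt_id)).smul contDiffAt_const)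
  have hW_smul : ∀ r > (0 : ℝ), ∀ z, sfn K (r • z) • (invGauss K (r • z) - c) -
      (sfn K (r • z) - ⟪c, r • z⟫_ℝ) • c =
      r • (sfn K z • (invGauss K z - c) - (sfn K z - ⟪c, z⟫_ℝ) • c) := by
    intro r hr z
    rw [sfn_smul hK.compact hK.nonempty hr.le, real_inner_smul_right]
    obtain rfl | hz := eq_or_ne z 0
    · simp [sfn_zero hK.nonempty]
    · rw [hK.invGauss_smul hz hr]
      module
  have hdiv := integral_sphere_trace_fderiv volume hW_smooth hW_smul
  simp_rw [hK.trace_fderiv_sfn_smul_sub c (ne_zero_of_mem_unit_sphere _), inner_sub_right,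
    real_inner_smul_right, inner_sub_right,
    hK.inner_invGauss_self (ne_zero_of_mem_unit_sphere _), real_inner_comm c] at hdiv
  change ∫ y : Sph n, _ ∂sphMeas n = _ * ∫ y : Sph n, _ ∂sphMeas n at hdiv
  rw [integral_add (integrable_of_continuous (by fun_prop))
    (integrable_of_continuous (by fun_prop))] at hdiv
  rw [hdiv, finrank_euclideanSpace_fin]
  push_cast
  congr 2
  ext y
  rw [real_inner_comm c]
  ring

lemma inner_invGauss_sub_cK (hK : IsSmoothConvexBody K) (y : Sph n) :
    ⟪(y : Eu n), invGauss K y - cK K⟫_ℝ = tsfn K y := by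
  rw [inner_sub_right, hK.inner_invGauss_self (ne_zero_of_mem_unit_sphere y), tsfn]

lemma inner_tangPart (hK : IsSmoothConvexBody K) (y : Sph n) :
    ⟪(y : Eu n), tangPart K y⟫_ℝ = 0 := by
  simp [tangPart, inner_sub_right _ _ (tsfn K y • _), hK.inner_invGauss_sub_cK,
    real_inner_smul_right]

lemma norm_invGauss_sub_cK_sq (hK : IsSmoothConvexBody K) (y : Sph n) :
    ‖invGauss K y - cK K‖ ^ 2 = tsfn K y ^ 2 + ‖tangPart K y‖ ^ 2 := by
  have horth : ⟪tsfn K y • (y : Eu n), tangPart K y⟫_ℝ = 0 := by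
    rw [real_inner_smul_left, hK.inner_tangPart, mul_zero]
  rw [show invGauss K y - cK K = tsfn K y • (y : Eu n) + tangPart K y by simp [tangPart], sq,
    norm_add_sq_eq_norm_sq_add_norm_sq_of_inner_eq_zero _ _ horth, norm_smul]
  simp [sq]

lemma continuous_tsfn (hK : IsSmoothConvexBody K) : Continuous fun y : Sph n => tsfn K y := by
  have hh := hK.continuous_sfn
  unfold tsfn
  fun_prop

lemma continuous_tangPart (hK : IsSmoothConvexBody K) :
    Continuous fun y : Sph n => tangPart K y := by
  have ht := hK.continuous_tsfn
  have hX := hK.continuous_invGauss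
  unfold tangPart
  fun_prop

lemma mul_integral_le_integral_coneMeas (hK : IsSmoothConvexBody K) {a : ℝ}
    (ha : ∀ x : Sph n, a ≤ dens K x) {f : Sph n → ℝ} (hf : Continuous f) (hf₀ : ∀ x, 0 ≤ f x) :
    a * ∫ x, f x ∂sphMeas n ≤ ∫ x, f x ∂coneMeas K := by
  have hdens := hK.continuous_dens
  rw [hK.integral_coneMeas, ← integral_const_mul]
  exact integral_mono (integrable_of_continuous (by fun_prop))
    (integrable_of_continuous (by fun_prop)) fun x => mul_le_mul_of_nonneg_right (ha x) (hf₀ x)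

lemma integral_coneMeas_le_mul_integral (hK : IsSmoothConvexBody K) {b : ℝ}
    (hb : ∀ x : Sph n, dens K x ≤ b) {f : Sph n → ℝ} (hf : Continuous f) (hf₀ : ∀ x, 0 ≤ f x) :
    ∫ x, f x ∂coneMeas K ≤ b * ∫ x, f x ∂sphMeas n := by
  have hdens := hK.continuous_dens
  rw [hK.integral_coneMeas, ← integral_const_mul]
  exact integral_mono (integrable_of_continuous (by fun_prop))
    (integrable_of_continuous (by fun_prop)) fun x => mul_le_mul_of_nonneg_right (hb x) (hf₀ x)

lemma mul_integral_norm_tangPart_sq_le (hK : IsSmoothConvexBody K) {a b : ℝ}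
    (ha : ∀ x : Sph n, a ≤ dens K x) (hb : ∀ x : Sph n, dens K x ≤ b) :
    (n * a + b) * ∫ y : Sph n, ‖tangPart K y‖ ^ 2 ∂sphMeas n ≤
      n * (b - a) * ∫ y : Sph n, tsfn K y ^ 2 ∂sphMeas n := by
  have hh := hK.continuous_sfn
  have ht := hK.continuous_tsfn
  have hT := hK.continuous_tangPart
  have hX := hK.continuous_invGauss
  have htrace := hK.continuous_trace_hessA
  have hsplit : ∫ y : Sph n, ‖invGauss K y - cK K‖ ^ 2 ∂sphMeas n =
      ∫ y : Sph n, tsfn K y ^ 2 ∂sphMeas n + ∫ y : Sph n, ‖tangPart K y‖ ^ 2 ∂sphMeas n := by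
    simp_rw [hK.norm_invGauss_sub_cK_sq]
    exact integral_add (integrable_of_continuous (by fun_prop))
      (integrable_of_continuous (by fun_prop))
  have hdiv := hK.integral_sfn_mul_trace_hessA_add (cK K)
  change _ + _ = _ * ∫ y : Sph n, tsfn K y ^ 2 ∂sphMeas n at hdiv
  have hlower := hK.mul_integral_le_integral_coneMeas ha
    (f := fun y => ‖invGauss K y - cK K‖ ^ 2) (by fun_prop) fun _ => by positivity
  have hupper := hK.integral_coneMeas_le_mul_integral hb
    (f := fun y => sfn K y * LinearMap.trace ℝ (Eu n) (hessA K y)) (by fun_prop) fun y =>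
      mul_nonneg (hK.pos y).le (hK.trace_hessA_nonneg y)
  have hBM := hK.mul_integral_norm_sub_cK_sq_le
  have hchain := (mul_le_mul_of_nonneg_left hlower n.cast_nonneg).trans (hBM.trans hupper)
  rw [eq_sub_of_add_eq hdiv, hsplit] at hchain
  linear_combination hchain

end IsSmoothConvexBody

section Concentration

lemma sq_integral_le {Y : Type*} [TopologicalSpace Y] [CompactSpace Y] [MeasurableSpace Y]
    [OpensMeasurableSpace Y] {μ : Measure Y} [IsFiniteMeasure μ] [NeZero μ] {f : Y → ℝ}
    (hf : Continuous f) : (∫ y, f y ∂μ) ^ 2 ≤ μ.real Set.univ * ∫ y, f y ^ 2 ∂μ := by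
  have hM : 0 < μ.real Set.univ := measureReal_univ_pos
  have hjensen := even_two.convexOn_pow.map_average_le (μ := μ) (f := f)
    (continuous_pow 2).continuousOn isClosed_univ (ae_of_all _ fun _ => Set.mem_univ _)
    (integrable_of_continuous hf) (integrable_of_continuous (hf.pow 2))
  simp only [average_eq, smul_eq_mul] at hjensen
  field_simp at hjensen
  linarith

lemma exists_forall_integral_norm_tangPart_le (n : ℕ) {η : ℝ} (hη : 0 < η) :
    ∃ ε₀ > 0, ∀ K : Set (Eu n), IsSmoothConvexBody K → ∀ ε ∈ Set.Ioo 0 ε₀,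
      (∀ x : Sph n, dens K x ∈ Set.Icc (1 - ε) (1 + ε)) → ∀ R, (∀ y : Sph n, |tsfn K y| ≤ R) →
        ∫ y : Sph n, ‖tangPart K y‖ ∂sphMeas n ≤ η * R := by
  set M := (sphMeas n).real Set.univ
  have hM : 0 < M := measureReal_univ_pos
  refine ⟨min 1 (η ^ 2 / (2 * (n + 1) * M ^ 2)), by positivity, fun K hK ε hε hd R hR => ?_⟩
  obtain ⟨hε₀, hε₁, hεη⟩ : 0 < ε ∧ ε < 1 ∧ ε < η ^ 2 / (2 * (n + 1) * M ^ 2) := by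
    simpa using hε
  rw [lt_div_iff₀ (by positivity)] at hεη
  have ht := hK.continuous_tsfn
  have hT := hK.continuous_tangPart
  set τ := ∫ y : Sph n, ‖tangPart K y‖ ^ 2 ∂sphMeas n
  have hτ₀ : 0 ≤ τ := integral_nonneg fun _ => by positivity
  have hR₀ : 0 ≤ R := (abs_nonneg _).trans (hR (sphMeas n).nonempty_of_neZero.some)
  have htsfn : ∫ y : Sph n, tsfn K y ^ 2 ∂sphMeas n ≤ M * R ^ 2 :=
    (integral_mono (integrable_of_continuous (ht.pow 2)) (integrable_const _) fun y =>
      sq_le_sq.2 ((hR y).trans (le_abs_self R))).trans_eq (by rw [integral_const, smul_eq_mul])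
  have hτ : τ ≤ 2 * (n + 1) * ε * (M * R ^ 2) := by
    have hstab := hK.mul_integral_norm_tangPart_sq_le (fun x => (hd x).1) fun x => (hd x).2
    calc τ ≤ (n * (1 - ε) + (1 + ε)) * τ :=
          le_mul_of_one_le_left hτ₀ (by
            linarith [mul_nonneg n.cast_nonneg (sub_nonneg.2 hε₁.le)])
      _ ≤ n * (1 + ε - (1 - ε)) * ∫ y : Sph n, tsfn K y ^ 2 ∂sphMeas n := hstab
      _ = 2 * n * ε * ∫ y : Sph n, tsfn K y ^ 2 ∂sphMeas n := by ring
      _ ≤ 2 * (n + 1) * ε * (M * R ^ 2) := by gcongr; linarith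
  refine abs_le_of_sq_le_sq' ?_ (by positivity) |>.2
  calc (∫ y : Sph n, ‖tangPart K y‖ ∂sphMeas n) ^ 2 ≤ M * τ := sq_integral_le hT.norm
    _ ≤ M * (2 * (n + 1) * ε * (M * R ^ 2)) := by gcongr
    _ = ε * (2 * (n + 1) * M ^ 2) * R ^ 2 := by ring
    _ ≤ η ^ 2 * R ^ 2 := by gcongr
    _ = (η * R) ^ 2 := by ring

end Concentration

section SphereGeometry

variable {E : Type*} [NormedAddCommGroup E] [InnerProductSpace ℝ E]

lemma inner_sub_le_inner_of_mem_ball {b y : sphere (0 : E) 1} {ρ : ℝ} (hy : y ∈ ball b ρ)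
    (w : sphere (0 : E) 1) : ⟪(b : E), w⟫_ℝ - ρ ≤ ⟪(y : E), w⟫_ℝ := by
  rw [mem_ball', Subtype.dist_eq, dist_eq_norm] at hy
  have hbound := real_inner_le_norm ((b : E) - y) w
  rw [inner_sub_left, norm_eq_of_mem_sphere w, mul_one] at hbound
  linarith

lemma exists_sphere_inner_eq_zero_and_inner_nonneg (hE : 1 < Module.finrank ℝ E) (x₁ x : E) :
    ∃ u : sphere (0 : E) 1, ⟪(u : E), x₁⟫_ℝ = 0 ∧ 0 ≤ ⟪(u : E), x⟫_ℝ := by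
  have := Module.finite_of_finrank_pos (zero_lt_one.trans hE)
  have hne : (ℝ ∙ x₁)ᗮ ≠ ⊥ := fun hbot => by
    have hfinrank := (ℝ ∙ x₁).finrank_add_finrank_orthogonal
    rw [hbot, finrank_bot] at hfinrank
    have hspan : Module.finrank ℝ (ℝ ∙ x₁) ≤ 1 := by simpa using finrank_span_le_card (R := ℝ) {x₁}
    omega
  obtain ⟨v, hv, hv₀⟩ := Submodule.exists_mem_ne_zero_of_ne_bot hne
  obtain ⟨u, hu⟩ := exists_norm_smul_sphere_eq hv₀
  have horth : ⟪(u : E), x₁⟫_ℝ = 0 := by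
    rw [Submodule.mem_orthogonal_singleton_iff_inner_left, ← hu, real_inner_smul_left] at hv
    exact (mul_eq_zero.1 hv).resolve_left (norm_ne_zero_iff.2 hv₀)
  rcases le_total 0 ⟪(u : E), x⟫_ℝ with h | h
  · exact ⟨u, horth, h⟩
  · exact ⟨-u, by simp [horth], by simpa using h⟩

lemma exists_sphere_half_le_inner {x x₁ : sphere (0 : E) 1} (hx : -(1 / 2) ≤ ⟪(x : E), x₁⟫_ℝ) :
    ∃ b : sphere (0 : E) 1, 1 / 2 ≤ ⟪(b : E), x⟫_ℝ ∧ 1 / 2 ≤ ⟪(b : E), x₁⟫_ℝ := by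
  have hnorm : ‖(x : E) + x₁‖ ^ 2 = 2 + 2 * ⟪(x : E), x₁⟫_ℝ := by
    rw [norm_add_sq_real, norm_eq_of_mem_sphere x, norm_eq_of_mem_sphere x₁]
    ring
  have hone : 1 ≤ ‖(x : E) + x₁‖ := (one_le_sq_iff₀ (norm_nonneg _)).1 (by linarith)
  have hpos := zero_lt_one.trans_le hone
  obtain ⟨b, hb⟩ := exists_norm_smul_sphere_eq (norm_pos_iff.1 hpos)
  have hinner (w : E) : ‖(x : E) + x₁‖ * ⟪(b : E), w⟫_ℝ = ⟪(x : E), w⟫_ℝ + ⟪(x₁ : E), w⟫_ℝ := by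
    rw [← real_inner_smul_left, hb, inner_add_left]
  refine ⟨b, le_of_mul_le_mul_left ?_ hpos, le_of_mul_le_mul_left ?_ hpos⟩
  · rw [hinner, real_inner_self_eq_norm_sq, norm_eq_of_mem_sphere, real_inner_comm]
    nlinarith
  · rw [hinner, real_inner_self_eq_norm_sq, norm_eq_of_mem_sphere]
    nlinarith

lemma exists_sphere_quarter_le_inner (hE : 1 < Module.finrank ℝ E) (x x₁ : sphere (0 : E) 1) :
    ∃ b : sphere (0 : E) 1, 1 / 4 ≤ ⟪(b : E), x⟫_ℝ ∧ -(1 / 3) ≤ ⟪(b : E), x₁⟫_ℝ := by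
  obtain ⟨u, hux₁, hux⟩ := exists_sphere_inner_eq_zero_and_inner_nonneg hE (x₁ : E) x
  have hnorm : ‖(x : E) + (3 : ℝ) • (u : E)‖ ^ 2 = 10 + 6 * ⟪(u : E), x⟫_ℝ := by
    rw [norm_add_sq_real, norm_smul, norm_eq_of_mem_sphere, norm_eq_of_mem_sphere,
      real_inner_smul_right, real_inner_comm]
    norm_num
    ring
  have hthree : 3 ≤ ‖(x : E) + (3 : ℝ) • (u : E)‖ :=
    le_of_sq_le_sq (by linarith) (norm_nonneg _)
  have hpos := three_pos.trans_le hthree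
  obtain ⟨b, hb⟩ := exists_norm_smul_sphere_eq (norm_pos_iff.1 hpos)
  have hinner (w : E) : ‖(x : E) + (3 : ℝ) • (u : E)‖ * ⟪(b : E), w⟫_ℝ =
      ⟪(x : E), w⟫_ℝ + 3 * ⟪(u : E), w⟫_ℝ := by
    rw [← real_inner_smul_left, hb, inner_add_left, real_inner_smul_left]
  refine ⟨b, le_of_mul_le_mul_left ?_ hpos, le_of_mul_le_mul_left ?_ hpos⟩
  · rw [hinner, real_inner_self_eq_norm_sq, norm_eq_of_mem_sphere]
    nlinarith
  · have hxx₁ := neg_le_of_abs_le (abs_real_inner_le_norm (x : E) x₁)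
    rw [norm_eq_of_mem_sphere, norm_eq_of_mem_sphere] at hxx₁
    rw [hinner, hux₁]
    linarith

end SphereGeometry

section ConvexBody

variable {n : ℕ} {K : Set (Eu n)}

lemma mem_of_forall_inner_le_sfn (hK : IsCompact K) (hconv : Convex ℝ K) (hne : K.Nonempty)
    {p : Eu n} (hp : ∀ x : Sph n, ⟪(x : Eu n), p⟫_ℝ ≤ sfn K x) : p ∈ K := by
  by_contra hpK
  obtain ⟨f, u, hf, hu⟩ := geometric_hahn_banach_closed_point hconv hK.isClosed hpK
  obtain ⟨v, rfl⟩ := (InnerProductSpace.toDual ℝ (Eu n)).surjective f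
  simp only [InnerProductSpace.toDual_apply_apply] at hf hu
  have hv : v ≠ 0 := by
    rintro rfl
    obtain ⟨q, hq⟩ := hne
    have := hf q hq
    simp only [inner_zero_left] at this hu
    linarith
  obtain ⟨x, hx⟩ := exists_norm_smul_sphere_eq hv
  obtain ⟨q, hq, hqx⟩ := exists_mem_inner_eq_sfn hK hne x
  have hlt := (hf q hq).trans hu
  rw [← hx, real_inner_smul_left, real_inner_smul_left, hqx] at hlt
  exact (lt_of_mul_lt_mul_left hlt (norm_nonneg v)).not_ge (hp x)

lemma closedBall_subset_of_forall_le_sfn_sub (hK : IsCompact K) (hconv : Convex ℝ K)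
    (hne : K.Nonempty) {c : Eu n} {r : ℝ} (h : ∀ x : Sph n, r ≤ sfn K x - ⟪(x : Eu n), c⟫_ℝ) :
    closedBall c r ⊆ K := fun p hp => by
  refine mem_of_forall_inner_le_sfn hK hconv hne fun x => ?_
  have hinner := real_inner_le_norm (x : Eu n) (p - c)
  rw [norm_eq_of_mem_sphere, one_mul, inner_sub_right] at hinner
  linarith [h x, mem_closedBall_iff_norm.1 hp]

lemma exists_subset_closedBall_and_forall_mul_inner_le (hK : IsCompact K) (hne : K.Nonempty)
    (c : Eu n) : ∃ (x₁ : Sph n) (R : ℝ), 0 ≤ R ∧ K ⊆ closedBall c R ∧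
      ∀ y : Sph n, R * ⟪(y : Eu n), x₁⟫_ℝ ≤ sfn K y - ⟪(y : Eu n), c⟫_ℝ := by
  obtain ⟨p, hp, hmax⟩ := hK.exists_isMaxOn hne (f := fun q => ‖q - c‖) (by fun_prop)
  obtain ⟨x₁, hx₁⟩ : ∃ x₁ : Sph n, ‖p - c‖ • (x₁ : Eu n) = p - c := by
    obtain h | h := eq_or_ne (p - c) 0
    · exact ⟨(sphMeas n).nonempty_of_neZero.some, by simp [h]⟩
    · exact exists_norm_smul_sphere_eq h
  refine ⟨x₁, ‖p - c‖, norm_nonneg _, fun q hq => mem_closedBall_iff_norm.2 (hmax hq), fun y => ?_⟩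
  rw [← real_inner_smul_right, hx₁, inner_sub_right]
  linarith [inner_le_sfn hK hp (y : Eu n)]

end ConvexBody

lemma exists_pos_forall_le_toSphere_real_ball {E : Type*} [NormedAddCommGroup E] [NormedSpace ℝ E]
    [FiniteDimensional ℝ E] [MeasurableSpace E] [BorelSpace E] (μ : Measure E)
    [μ.IsAddHaarMeasure] {ρ : ℝ} (hρ : 0 < ρ) :
    ∃ m > 0, ∀ b : sphere (0 : E) 1, m ≤ μ.toSphere.real (ball b ρ) :=
  ⟨Measure.toSphereBallBound (Module.finrank ℝ E) ρ * μ.real (ball 0 1),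
    mul_pos (Measure.toSphereBallBound_pos _ _)
      (ENNReal.toReal_pos (measure_ball_pos μ 0 one_pos).ne' measure_ball_lt_top.ne),
    μ.toSphereBallBound_mul_measureReal_unitBall_le_toSphere_ball hρ⟩

namespace IsSmoothConvexBody

variable {n : ℕ} {K : Set (Eu n)}

lemma abs_tsfn_le (hK : IsSmoothConvexBody K) {R : ℝ} (hR : K ⊆ closedBall (cK K) R) (y : Sph n) :
    |tsfn K y| ≤ R := by
  rw [← hK.inner_invGauss_sub_cK y]
  refine (abs_real_inner_le_norm _ _).trans ?_
  rw [norm_eq_of_mem_sphere, one_mul]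
  exact mem_closedBall_iff_norm.1 (hR (hK.invGauss_mem (ne_zero_of_mem_unit_sphere y)))

lemma le_pow_of_subset_closedBall (hK : IsSmoothConvexBody K) (h₀ : (0 : Eu n) ∈ K) {a R : ℝ}
    (hR : 0 ≤ R) {c : Eu n} (hc : K ⊆ closedBall c R) (ha : ∀ x : Sph n, a ≤ dens K x) :
    a ≤ R ^ (n + 1) := by
  have hsub : radialRegion (fun x : Sph n => invGauss K x) (fun _ => 1) ⊆ K := by
    rintro _ ⟨⟨y, s⟩, hs : (s : ℝ) < 1, rfl⟩
    exact hK.convex.smul_mem_of_zero_mem h₀ (hK.invGauss_mem (ne_zero_of_mem_unit_sphere y))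
      ⟨(Set.mem_Ioi.1 s.2).le, hs.le⟩
  have hmono := measure_mono (μ := volume) (hsub.trans hc)
  have hball : 0 < volume.real (ball (0 : Eu n) 1) :=
    ENNReal.toReal_pos (measure_ball_pos volume 0 one_pos).ne' measure_ball_lt_top.ne
  rw [hK.volume_radialRegion continuous_const fun _ => one_pos, Measure.addHaar_closedBall _ _ hR,
    finrank_euclideanSpace_fin, ← ofReal_measureReal measure_ball_lt_top.ne,
    ← ENNReal.ofReal_mul (by positivity), ENNReal.ofReal_le_ofReal_iff (by positivity),
    div_le_iff₀ (by positivity)] at hmono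
  have hlower := hK.mul_integral_le_integral_coneMeas ha (f := fun _ => 1 ^ (n + 1))
    continuous_const fun _ => by positivity
  have harea : ∫ _ : Sph n, (1 : ℝ) ^ (n + 1) ∂sphMeas n =
      (n + 1) * volume.real (ball (0 : Eu n) 1) := by
    simp [sphMeas, Measure.toSphere_real_apply_univ]
  rw [harea] at hlower
  refine le_of_mul_le_mul_right (a := (n + 1) * volume.real (ball (0 : Eu n) 1)) ?_ (by positivity)
  linarith

lemma le_of_subset_closedBall (hK : IsSmoothConvexBody K) (h₀ : (0 : Eu n) ∈ K) {a R : ℝ}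
    (hR : 0 ≤ R) {c : Eu n} (hc : K ⊆ closedBall c R) (ha₁ : a ≤ 1)
    (ha : ∀ x : Sph n, a ≤ dens K x) : a ≤ R := by
  rcases le_total R 1 with h | h
  · exact (hK.le_pow_of_subset_closedBall h₀ hR hc ha).trans
      (pow_le_of_le_one hR h n.succ_ne_zero)
  · exact ha₁.trans h

lemma tsfn_mul_inner_sub_norm_tangPart_le (hK : IsSmoothConvexBody K) (x y : Sph n) :
    tsfn K y * ⟪(y : Eu n), x⟫_ℝ - ‖tangPart K y‖ ≤ tsfn K x := by
  have hsplit : ⟪(x : Eu n), invGauss K y - cK K⟫_ℝ =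
      tsfn K y * ⟪(y : Eu n), x⟫_ℝ + ⟪(x : Eu n), tangPart K y⟫_ℝ := by
    rw [tangPart, inner_sub_right _ _ (tsfn K y • (y : Eu n)), real_inner_smul_right,
      real_inner_comm (x : Eu n) (y : Eu n)]
    ring
  have htang := neg_le_of_abs_le (abs_real_inner_le_norm (x : Eu n) (tangPart K y))
  rw [norm_eq_of_mem_sphere, one_mul] at htang
  have hle := hK.inner_invGauss_le (ne_zero_of_mem_unit_sphere y) (x : Eu n)
  rw [inner_sub_right] at hsplit
  rw [tsfn.eq_def K (x : Eu n)]
  linarith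

lemma mul_sub_le_tsfn_of_forall_mem (hK : IsSmoothConvexBody K) {s : Set (Sph n)}
    (hs : MeasurableSet s) (hs₀ : 0 < (sphMeas n).real s) {α β δ : ℝ} (hα : 0 ≤ α) (hβ : 0 ≤ β)
    (hδ : ∫ y : Sph n, ‖tangPart K y‖ ∂sphMeas n ≤ (sphMeas n).real s * δ) {x : Sph n}
    (hx : ∀ y ∈ s, α ≤ ⟪(y : Eu n), x⟫_ℝ) (ht : ∀ y ∈ s, β ≤ tsfn K y) : β * α - δ ≤ tsfn K x := by
  have hint : Integrable (fun y : Sph n => ‖tangPart K y‖) (sphMeas n) :=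
    integrable_of_continuous hK.continuous_tangPart.norm
  have hpoint : ∀ y ∈ s, β * α - tsfn K x ≤ ‖tangPart K y‖ := fun y hy => by
    have hprod := mul_le_mul (ht y hy) (hx y hy) hα (hβ.trans (ht y hy))
    linarith [hK.tsfn_mul_inner_sub_norm_tangPart_le x y]
  have hle : (sphMeas n).real s * (β * α - tsfn K x) ≤ (sphMeas n).real s * δ :=
    calc (sphMeas n).real s * (β * α - tsfn K x)
        ≤ ∫ y in s, ‖tangPart K y‖ ∂sphMeas n := by
          rw [mul_comm]
          exact setIntegral_ge_of_const_le_real hs (measure_ne_top _ _) hpoint hint.integrableOn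
      _ ≤ ∫ y : Sph n, ‖tangPart K y‖ ∂sphMeas n :=
          setIntegral_le_integral hint (ae_of_all _ fun _ => norm_nonneg _)
      _ ≤ (sphMeas n).real s * δ := hδ
  linarith [le_of_mul_le_mul_left hle hs₀]

lemma mul_sub_le_tsfn_of_forall_mem_ball (hK : IsSmoothConvexBody K) {m α β δ ρ : ℝ} (hm : 0 < m)
    (hα : 0 ≤ α) (hβ : 0 ≤ β) (hδ₀ : 0 ≤ δ) {x b : Sph n} (hb : m ≤ (sphMeas n).real (ball b ρ))
    (hδ : ∫ y : Sph n, ‖tangPart K y‖ ∂sphMeas n ≤ m * δ) (hx : α + ρ ≤ ⟪(b : Eu n), x⟫_ℝ)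
    (ht : ∀ y ∈ ball b ρ, β ≤ tsfn K y) : β * α - δ ≤ tsfn K x :=
  hK.mul_sub_le_tsfn_of_forall_mem measurableSet_ball (hm.trans_le hb) hα hβ
    (hδ.trans (mul_le_mul_of_nonneg_right hb hδ₀))
    (fun _ hy => (le_sub_iff_add_le.2 hx).trans (inner_sub_le_inner_of_mem_ball hy x)) ht

lemma le_tsfn_of_neg_half_le_inner (hK : IsSmoothConvexBody K) {m R : ℝ} (hm : 0 < m) (hR : 0 ≤ R)
    (hball : ∀ b : Sph n, m ≤ (sphMeas n).real (ball b (1 / 8)))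
    (hT : ∫ y : Sph n, ‖tangPart K y‖ ∂sphMeas n ≤ m * (R / 2048)) {x₁ : Sph n}
    (hx₁ : ∀ y : Sph n, R * ⟪(y : Eu n), x₁⟫_ℝ ≤ tsfn K y) {x : Sph n}
    (hx : -(1 / 2) ≤ ⟪(x : Eu n), x₁⟫_ℝ) : R / 16 ≤ tsfn K x := by
  obtain ⟨b, hbx, hbx₁⟩ := exists_sphere_half_le_inner hx
  have hcap : ∀ y ∈ ball b (1 / 8), R * (3 / 8) ≤ tsfn K y := fun y hy => by
    have hy₁ := inner_sub_le_inner_of_mem_ball hy x₁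
    exact (mul_le_mul_of_nonneg_left (by linarith) hR).trans (hx₁ y)
  have := hK.mul_sub_le_tsfn_of_forall_mem_ball (α := 3 / 8) (x := x) hm (by norm_num)
    (by positivity) (by positivity) (hball b) hT (by linarith) hcap
  linarith

lemma le_tsfn_of_forall_mul_inner_le (hn : 1 ≤ n) (hK : IsSmoothConvexBody K) {m R : ℝ}
    (hm : 0 < m) (hR : 0 ≤ R) (hball : ∀ b : Sph n, m ≤ (sphMeas n).real (ball b (1 / 8)))
    (hT : ∫ y : Sph n, ‖tangPart K y‖ ∂sphMeas n ≤ m * (R / 2048)) {x₁ : Sph n}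
    (hx₁ : ∀ y : Sph n, R * ⟪(y : Eu n), x₁⟫_ℝ ≤ tsfn K y) (x : Sph n) : R / 256 ≤ tsfn K x := by
  have hfinrank : 1 < Module.finrank ℝ (Eu n) := by
    rw [finrank_euclideanSpace_fin]
    omega
  obtain ⟨b, hbx, hbx₁⟩ := exists_sphere_quarter_le_inner hfinrank x x₁
  have hcap : ∀ y ∈ ball b (1 / 8), R / 16 ≤ tsfn K y := fun y hy => by
    have hy₁ := inner_sub_le_inner_of_mem_ball hy x₁
    exact hK.le_tsfn_of_neg_half_le_inner hm hR hball hT hx₁ (by linarith)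
  have := hK.mul_sub_le_tsfn_of_forall_mem_ball (α := 1 / 8) (x := x) hm (by norm_num)
    (by positivity) (by positivity) (hball b) hT (by linarith) hcap
  linarith

end IsSmoothConvexBody

/-- There exist `ε₀, r > 0` depending only on `n` such that if `K` is a smooth,
strictly convex body with the origin in its interior and `1−ε ≤ h/𝒦 ≤ 1+ε` on
`S^n` for some `ε ∈ (0, ε₀)`, then `K − c(K)` contains the closed ball of radius
`r` centered at the origin, i.e. `h̃ ≥ r` on `S^n`. -/
theorem inradius_lower_bound (n : ℕ) (hn : 1 ≤ n) :
    ∃ ε₀ r : ℝ, 0 < ε₀ ∧ 0 < r ∧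
      ∀ K : Set (Eu n), IsSmoothConvexBody K → (0 : Eu n) ∈ interior K →
        ∀ ε : ℝ, ε ∈ Set.Ioo 0 ε₀ →
          (∀ x : Sph n, 1 - ε ≤ dens K (x : Eu n) ∧ dens K (x : Eu n) ≤ 1 + ε) →
          Metric.closedBall (cK K) r ⊆ K ∧ ∀ x : Sph n, r ≤ tsfn K (x : Eu n) := by
  obtain ⟨m, hm, hball⟩ := exists_pos_forall_le_toSphere_real_ball (volume : Measure (Eu n))
    (show (0 : ℝ) < 1 / 8 by norm_num)
  obtain ⟨ε₁, hε₁, hconc⟩ := exists_forall_integral_norm_tangPart_le n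
    (show 0 < m / 2048 by positivity)
  refine ⟨min (1 / 2) ε₁, 1 / 512, by positivity, by norm_num, fun K hK h₀ ε hε hdens => ?_⟩
  obtain ⟨hε₀, hε_half, hε_lt⟩ : 0 < ε ∧ ε < 1 / 2 ∧ ε < ε₁ := by simpa [lt_min_iff] using hε
  obtain ⟨x₁, R, hR₀, hKR, hx₁⟩ :=
    exists_subset_closedBall_and_forall_mul_inner_le hK.compact hK.nonempty (cK K)
  have hR : 1 / 2 ≤ R := hK.le_of_subset_closedBall (interior_subset h₀) hR₀ hKR (by norm_num)
    fun x => (by linarith : 1 / 2 ≤ 1 - ε).trans (hdens x).1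
  have hT := hconc K hK ε ⟨hε₀, hε_lt⟩ hdens R (hK.abs_tsfn_le hKR)
  rw [div_mul_comm, mul_comm] at hT
  have hlower (x : Sph n) : 1 / 512 ≤ tsfn K x :=
    (by linarith : 1 / 512 ≤ R / 256).trans
      (hK.le_tsfn_of_forall_mul_inner_le hn hm hR₀ hball hT hx₁ x)
  exact ⟨closedBall_subset_of_forall_le_sfn_sub hK.compact hK.convex hK.nonempty hlower, hlower⟩
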